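/- arXiv:2509.06521 — 2 statements merged into one kernel-verified Lean document; each statement's English description precedes it below -/
import Mathlib

section
/- Let G be a finite soluble group whose Sylow subgroups all have nilpotency class at most 2, and whose Sylow 2-subgroups are isomorphic to the quaternion group Q8. Then G is an IYB-group. -/
/-- A finite group is an IYB-group iff it is the multiplicative group of a left
brace, i.e. there is an abelian group operation `+` on `G` with
`a(b + c) = ab − a + ac`. -/
def IsIYB (G : Type*) [Group G] : Prop :=
  ∃ (add : G → G → G) (neg : G → G) (zero : G),
    (∀ a b, add a b = add b a) ∧
    (∀ a b c, add (add a b) c = add a (add b c)) ∧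
    (∀ a, add zero a = a) ∧
    (∀ a, add (neg a) a = zero) ∧
    (∀ a b c : G, a * add b c = add (add (a * b) (neg a)) (a * c))

/-!
Let `L` be a group of class at most two and let `φ : L × L → Z(L)` be bimultiplicative, trivial on
the center, with `φ(y, x) = ⁅x, y⁆ φ(x, y)`. Then `x + y = x y φ(x, y)` makes `L` a left brace. In
odd order a power of the commutator is such a `φ`, and on a nonabelian `2`-group all of whose proper
subgroups are commutative one is written down on two generators. When `L` is normal in `G`, the
pairing can be chosen `G`-invariant: average it over `G ⧸ L` if the index is odd; if the index is
even, the Sylow `2`-subgroups of `L` are proper in those of `G`, hence commutative, and a power of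
the commutator works again.

If `G` is not nilpotent, the Frattini argument yields `G = L N(Q)` for a `q`-group `Q` which is not
normal and a normal nilpotent `q'`-subgroup `L = ⁅L, Q⁆`. By induction `N(Q)` is a left brace, and
`L ∩ N(Q) ≤ C_L(Q) ≤ ⁅L, L⁆` is central in `L`. The additions of `L` and `N(Q)` can be glued as soon
as this intersection also lies in the socle of `N(Q)`. The induction therefore carries along that,
for every prime `p`, the socle contains the `p`-elements which commute with all `p`-elements; the
elements of `p`-power order in `⁅L, L⁆` are of this kind.
-/

open Subgroup hiding lowerCentralSeries
open Function
open scoped commutatorElement IsMulCommutative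

/-! ### Left braces -/

/-- A left brace with multiplicative group `B`; the law `a(b + c) = ab - a + ac` is written
without subtraction. -/
class LeftBrace (B : Type*) [Group B] extends AddCommGroup B where
  mul_add_add_self (a b c : B) : a * (b + c) + a = a * b + a * c

namespace LeftBrace

variable {B : Type*} [Group B] [LeftBrace B]

theorem mul_add_eq (a b c : B) : a * (b + c) = a * b - a + a * c := by
  rw [sub_add_eq_add_sub, eq_sub_iff_add_eq, mul_add_add_self]

variable (B) in
theorem isIYB : IsIYB B :=
  ⟨(· + ·), (- ·), 0, add_comm, add_assoc, zero_add, neg_add_cancel, fun a b c => by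
    rw [mul_add_eq, sub_eq_add_neg]⟩

variable (B) in
theorem zero_eq_one : (0 : B) = 1 :=
  (show (1 : B) = 0 by simpa using mul_add_eq (1 : B) 0 0).symm

theorem one_add (a : B) : 1 + a = a := by
  rw [← zero_eq_one, zero_add]

variable (B) in
/-- The socle of a left brace, which is the kernel of its lambda map `a ↦ (b ↦ -a + ab)`. -/
def socle : Subgroup B where
  carrier := {a | ∀ b, a + b = a * b}
  one_mem' b := by rw [one_add, one_mul]
  mul_mem' {a c} ha hc b := by rw [← ha c, add_assoc, hc, ha, ha, mul_assoc]
  inv_mem' {a} ha b := by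
    have neg_eq_inv : -a = a⁻¹ := by
      rw [neg_eq_iff_add_eq_zero, ha, mul_inv_cancel, zero_eq_one]
    rw [← neg_eq_inv, neg_add_eq_iff_eq_add, ha, neg_eq_inv, mul_inv_cancel_left]

end LeftBrace

theorem exists_addCommGroup_of_surjective {A B : Type*} [AddCommGroup A] (f : A → B)
    (hf : Surjective f) (hadd : ∀ x x' y, f x = f x' → f (x + y) = f (x' + y)) :
    ∃ _ : AddCommGroup B, ∀ x y, f (x + y) = f x + f y := by
  let c : AddCon A :=
    { Setoid.ker f with
      add' := fun {w x y z} hwx hyz => by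
        change f (w + y) = f (x + z)
        rw [hadd w x y hwx, add_comm, hadd y z x hyz, add_comm] }
  let e : B ≃ c.Quotient := (Setoid.quotientKerEquivOfSurjective f hf).symm
  have he (x : A) : e (f x) = x :=
    (Equiv.symm_apply_eq (Setoid.quotientKerEquivOfSurjective f hf)).2 rfl
  let : AddCommGroup B := e.addCommGroup
  refine ⟨e.addCommGroup, fun x y => e.injective ?_⟩
  rw [Equiv.add_def e, e.apply_symm_apply]
  simp only [he, AddCon.coe_add]

section Glue

variable {G : Type*} [Group G] {L H : Subgroup G}

theorem exists_eq_mul_of_sup_eq_top [L.Normal] (hLH : L ⊔ H = ⊤) (g : G) :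
    ∃ (l : L) (h : H), (l * h : G) = g := by
  obtain ⟨l, hl, h, hh, rfl⟩ := mem_sup_of_normal_left.1 (hLH ▸ mem_top g)
  exact ⟨⟨l, hl⟩, ⟨h, hh⟩, rfl⟩

theorem mul_add_mul_congr_left [LeftBrace L] [LeftBrace H]
    (hL : H.subgroupOf L ≤ center L ⊓ LeftBrace.socle L)
    (hH : L.subgroupOf H ≤ LeftBrace.socle H) {l₁ l₂ : L} {h₁ h₂ : H}
    (heq : (l₁ * h₁ : G) = l₂ * h₂) (l : L) (h : H) :
    ((l₁ + l : L) * (h₁ + h : H) : G) = (l₂ + l : L) * (h₂ + h : H) := by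
  -- The two factorisations differ by an element `k` of `L ∩ H`, which acts by translation.
  have hk : ((l₁⁻¹ * l₂ : L) : G) = (h₁ * h₂⁻¹ : H) := by
    simp only [coe_mul, coe_inv]
    rw [inv_mul_eq_iff_eq_mul, ← mul_assoc, eq_mul_inv_iff_mul_eq, heq]
  obtain ⟨k, hkl⟩ : ∃ k : L, k = l₁⁻¹ * l₂ := ⟨_, rfl⟩
  obtain ⟨k', hkh⟩ : ∃ k' : H, k' = h₁ * h₂⁻¹ := ⟨_, rfl⟩
  rw [← hkl, ← hkh] at hk
  obtain ⟨hkc, hks⟩ := hL (show k ∈ H.subgroupOf L from mem_subgroupOf.2 (hk ▸ k'.2))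
  have hks' := hH (show k' ∈ L.subgroupOf H from mem_subgroupOf.2 (hk ▸ k.2))
  obtain rfl : l₂ = k + l₁ := by
    rw [hks, ← mem_center_iff.1 hkc, hkl, mul_inv_cancel_left]
  obtain rfl : h₁ = k' + h₂ := by rw [hks', hkh, inv_mul_cancel_right]
  rw [add_assoc, add_assoc, hks, hks', ← mem_center_iff.1 hkc]
  simp only [coe_mul, hk, mul_assoc]

theorem exists_leftBrace_of_sup_eq_top [L.Normal] [LeftBrace L] [LeftBrace H] (hLH : L ⊔ H = ⊤)
    (hconj : ∀ (g : G) (x y : L),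
      MulAut.conjNormal g (x + y) = MulAut.conjNormal g x + MulAut.conjNormal g y)
    (hL : H.subgroupOf L ≤ center L ⊓ LeftBrace.socle L)
    (hH : L.subgroupOf H ≤ LeftBrace.socle H) :
    ∃ _ : LeftBrace G, ∀ (l l' : L) (h h' : H),
      (l * h + l' * h' : G) = (l + l' : L) * (h + h' : H) := by
  obtain ⟨hG, hadd⟩ := exists_addCommGroup_of_surjective (fun x : L × H => (x.1 * x.2 : G))
    (fun g => let ⟨l, h, hg⟩ := exists_eq_mul_of_sup_eq_top hLH g; ⟨(l, h), hg⟩)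
    fun _ _ y hx => mul_add_mul_congr_left hL hH hx y.1 y.2
  have hadd' (l l' : L) (h h' : H) : (l * h + l' * h' : G) = (l + l' : L) * (h + h' : H) :=
    (hadd (l, h) (l', h')).symm
  have hmul (l l' : L) (h h' : H) :
      (l * h * (l' * h') : G) = (l * MulAut.conjNormal (h : G) l' : L) * (h * h' : H) := by
    simp [mul_assoc]
  refine ⟨{ hG with mul_add_add_self := fun a b c => ?_ }, hadd'⟩
  obtain ⟨l, h, rfl⟩ := exists_eq_mul_of_sup_eq_top hLH a
  obtain ⟨l', h', rfl⟩ := exists_eq_mul_of_sup_eq_top hLH b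
  obtain ⟨l'', h'', rfl⟩ := exists_eq_mul_of_sup_eq_top hLH c
  rw [hadd', hmul, hmul, hmul, hadd', hadd', hconj, LeftBrace.mul_add_add_self,
    LeftBrace.mul_add_add_self]

section Socle

variable [L.Normal] [LeftBrace L] [LeftBrace H] [LeftBrace G] (hLH : L ⊔ H = ⊤)
  (hadd : ∀ (l l' : L) (h h' : H), (l * h + l' * h' : G) = (l + l' : L) * (h + h' : H))
include hLH hadd

theorem map_subtype_socle_le_socle : (LeftBrace.socle L).map L.subtype ≤ LeftBrace.socle G := by
  rintro _ ⟨l, hl, rfl⟩ b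
  obtain ⟨l', h', rfl⟩ := exists_eq_mul_of_sup_eq_top hLH b
  calc (l + l' * h' : G) = l * (1 : H) + l' * h' := by rw [coe_one, mul_one]
    _ = l * (l' * h') := by
      rw [hadd, hl, LeftBrace.one_add, coe_mul, mul_assoc]

theorem map_subtype_socle_inf_centralizer_le_socle :
    (LeftBrace.socle H).map H.subtype ⊓ centralizer L ≤ LeftBrace.socle G := by
  rintro _ ⟨⟨h, hh, rfl⟩, hc⟩ b
  obtain ⟨l', h', rfl⟩ := exists_eq_mul_of_sup_eq_top hLH b
  calc (h + l' * h' : G) = (1 : L) * h + l' * h' := by rw [coe_one, one_mul]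
    _ = l' * h * h' := by rw [hadd, hh, LeftBrace.one_add, coe_mul, mul_assoc]
    _ = h * (l' * h') := by rw [show (l' * h : G) = h * l' from hc l' l'.2, mul_assoc]

end Socle

end Glue

/-! ### Half-commutators -/

/-- A group of nilpotency class at most two. -/
class ClassLETwo (L : Type*) [Group L] : Prop where
  commutator_le_center : commutator L ≤ center L

namespace ClassLETwo

variable {L : Type*} [Group L]

theorem of_commute (h : ∀ x y z : L, Commute ⁅x, y⁆ z) : ClassLETwo L where
  commutator_le_center := commutator_le.2 fun x _ y _ =>
    mem_center_iff.2 fun z => (h x y z).symm.eq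

theorem commutatorElement_mem_center [ClassLETwo L] (x y : L) : ⁅x, y⁆ ∈ center L :=
  commutator_le_center (commutator_mem_commutator (mem_top x) (mem_top y))

theorem commute_commutatorElement [ClassLETwo L] (x y z : L) : Commute ⁅x, y⁆ z :=
  (mem_center_iff.1 (commutatorElement_mem_center x y) z).symm

theorem of_injective {L' : Type*} [Group L'] [ClassLETwo L'] {f : L →* L'} (hf : Injective f) :
    ClassLETwo L :=
  of_commute fun x y z => hf <| by
    simpa using (commute_commutatorElement (f x) (f y) (f z)).eq

end ClassLETwo

theorem mul_right_comm_of_center {L : Type*} [Group L] (x y : L) (z : center L) :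
    x * z * y = x * y * z := by
  rw [mul_assoc, ← mem_center_iff.1 z.2, mul_assoc]

/-- A bimultiplicative pairing on a group with values in its center. -/
abbrev CentralPairing (L : Type*) [Group L] := L →* L →* center L

section Commutator

variable (L : Type*) [Group L] [ClassLETwo L]

/-- The commutator, as a pairing on a group of class at most two. -/
def commutatorPairing : CentralPairing L :=
  MonoidHom.mk' (fun x => MonoidHom.mk'
    (fun y => ⟨⁅x, y⁆, ClassLETwo.commutatorElement_mem_center x y⟩)
    fun y z => Subtype.ext <| by
      simp [commutatorElement_mul_right_eq_mul_conj, mul_assoc,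
        (ClassLETwo.commute_commutatorElement x z y⁻¹).eq])
    fun x y => MonoidHom.ext fun z => Subtype.ext <| by
      simp [commutatorElement_mul_left_eq_conj_mul,
        (ClassLETwo.commute_commutatorElement y z x).symm.eq,
        (ClassLETwo.commute_commutatorElement x z ⁅y, z⁆).eq]

variable {L}

@[simp]
theorem coe_commutatorPairing (x y : L) : (commutatorPairing L x y : L) = ⁅x, y⁆ := rfl

theorem commutatorPairing_self (x : L) : commutatorPairing L x x = 1 :=
  Subtype.ext (commutatorElement_self x)

theorem commutatorPairing_swap (x y : L) :
    commutatorPairing L y x = (commutatorPairing L x y)⁻¹ :=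
  Subtype.ext (commutatorElement_inv x y).symm

theorem commutatorPairing_eq_one_of_mem_center {z : L} (hz : z ∈ center L) :
    commutatorPairing L z = 1 :=
  MonoidHom.ext fun x => Subtype.ext <|
    commutatorElement_eq_one_iff_mul_comm.2 (mem_center_iff.1 hz x).symm

end Commutator

namespace CentralPairing

variable {L M : Type*} [Group L] [Group M]

/-- Transport of central pairings along an isomorphism. -/
def congr (e : L ≃* M) : CentralPairing L →* CentralPairing M where
  toFun φ := (MonoidHom.compHom (centerCongr e).toMonoidHom).comp
    ((MonoidHom.compHom' e.symm.toMonoidHom).comp (φ.comp e.symm.toMonoidHom))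
  map_one' := by ext; simp
  map_mul' φ ψ := by ext; simp

/-- The addition `x + y = x y φ(x, y)` attached to a central pairing `φ`. -/
def add (φ : CentralPairing L) (x y : L) : L := x * y * φ x y

@[simp]
theorem coe_congr_apply (e : L ≃* M) (φ : CentralPairing L) (x y : M) :
    (congr e φ x y : M) = e (φ (e.symm x) (e.symm y)) := rfl

theorem congr_mul (σ τ : MulAut L) (φ : CentralPairing L) :
    congr (σ * τ) φ = congr σ (congr τ φ) := rfl

theorem congr_commutatorPairing [ClassLETwo L] [ClassLETwo M] (e : L ≃* M) :
    congr e (commutatorPairing L) = commutatorPairing M := by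
  ext x y
  simp

end CentralPairing

/-- A central pairing whose antisymmetrisation is the commutator and which factors through the
quotient by the center: these are the pairings `φ` for which `x + y = x y φ(x, y)` is a left brace
addition. -/
structure IsHalfCommutator {L : Type*} [Group L] [ClassLETwo L] (φ : CentralPairing L) : Prop where
  eq_one_of_mem_center {z : L} : z ∈ center L → φ z = 1
  apply_swap (x y : L) : φ y x = commutatorPairing L x y * φ x y

namespace IsHalfCommutator

variable {L : Type*} [Group L] [ClassLETwo L] {φ : CentralPairing L} (hφ : IsHalfCommutator φ)
include hφ

theorem apply_eq_one_of_mem_center {z : L} (hz : z ∈ center L) (x : L) : φ x z = 1 := by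
  simp [hφ.apply_swap z x, commutatorPairing_eq_one_of_mem_center hz, hφ.eq_one_of_mem_center hz]

theorem add_comm (x y : L) : φ.add x y = φ.add y x := by
  rw [CentralPairing.add, CentralPairing.add, hφ.apply_swap x y, coe_mul, coe_commutatorPairing,
    ← mul_assoc, ← (ClassLETwo.commute_commutatorElement x y (y * x)).eq]
  simp [commutatorElement_def, mul_assoc]

theorem apply_add_left (x y z : L) : φ (φ.add x y) z = φ x z * φ y z := by
  simp [CentralPairing.add, hφ.eq_one_of_mem_center (φ x y).2]

theorem apply_add_right (x y z : L) : φ x (φ.add y z) = φ x y * φ x z := by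
  simp [CentralPairing.add, hφ.apply_eq_one_of_mem_center (φ y z).2]

theorem add_assoc (x y z : L) : φ.add (φ.add x y) z = φ.add x (φ.add y z) := by
  rw [CentralPairing.add, hφ.apply_add_left, CentralPairing.add, CentralPairing.add,
    hφ.apply_add_right, CentralPairing.add, mul_right_comm_of_center, ← mul_assoc x,
    ← mul_assoc x, mul_assoc, ← coe_mul, mul_assoc (x * y * z), ← coe_mul]
  congr 2
  ac_rfl

theorem mul_add_add_self (a b c : L) :
    φ.add (a * φ.add b c) a = φ.add (a * b) (a * c) := by
  have swap : φ.add c a = φ.add a c := hφ.add_comm c a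
  simp only [CentralPairing.add] at swap ⊢
  calc a * (b * c * φ b c) * a * φ (a * (b * c * φ b c)) a
      = a * b * (c * a * φ c a) * (φ a a * φ b a * φ b c : center L) := by
        simp only [map_mul, MonoidHom.mul_apply, hφ.eq_one_of_mem_center (φ b c).2, mul_one,
          ← mul_assoc]
        rw [mul_right_comm_of_center _ a, mul_assoc, mul_assoc _ (φ c a : L), ← coe_mul, ← coe_mul]
        congr 2
        rw [mul_left_comm, mul_comm (φ c a)]
        simp only [mul_assoc]
    _ = a * b * (a * c * φ a c) * (φ a a * φ b a * φ b c : center L) := by rw [swap]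
    _ = a * b * (a * c) * φ (a * b) (a * c) := by
        simp only [map_mul, MonoidHom.mul_apply, ← mul_assoc]
        rw [mul_assoc _ (φ a c : L), ← coe_mul]
        congr 2
        ac_rfl

/-- The left brace with addition `x + y = x y φ(x, y)`. -/
abbrev leftBrace : LeftBrace L :=
  letI : Add L := ⟨φ.add⟩
  letI : Neg L := ⟨fun x => x⁻¹ * φ x x⟩
  letI : Zero L := ⟨1⟩
  { AddGroup.ofLeftAxioms hφ.add_assoc
      (fun x => by
        change 1 * x * (φ 1 x : L) = x
        simp)
      (fun x => by
        change x⁻¹ * φ x x * x * (φ (x⁻¹ * φ x x) x : L) = 1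
        simp [hφ.eq_one_of_mem_center (φ x x).2, mul_right_comm_of_center]) with
    add_comm := hφ.add_comm
    mul_add_add_self := hφ.mul_add_add_self }

theorem center_le_socle :
    let _ := hφ.leftBrace
    center L ≤ LeftBrace.socle L := fun z hz x => by
  change z * x * (φ z x : L) = z * x
  simp [hφ.eq_one_of_mem_center hz]

theorem map_add_of_congr_eq {σ : MulAut L} (hσ : CentralPairing.congr σ φ = φ) :
    let _ := hφ.leftBrace
    ∀ x y : L, σ (x + y) = σ x + σ y := by
  intro _ x y
  change σ (x * y * φ x y) = σ x * σ y * φ (σ x) (σ y)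
  nth_rw 2 [← hσ]
  simp

end IsHalfCommutator

section Constructions

variable {L L' : Type*} [Group L] [Group L'] [ClassLETwo L] [ClassLETwo L']

theorem isHalfCommutator_commutatorPairing_pow {m : ℕ}
    (hm : commutatorPairing L ^ (2 * m + 1) = 1) :
    IsHalfCommutator (commutatorPairing L ^ m) where
  eq_one_of_mem_center hz := by simp [commutatorPairing_eq_one_of_mem_center hz]
  apply_swap x y := by
    have hxy : commutatorPairing L x y ^ (2 * m + 1) = 1 := by
      simpa using DFunLike.congr_fun (DFunLike.congr_fun hm x) y
    simp only [MonoidHom.pow_apply, commutatorPairing_swap x y, inv_pow]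
    rw [inv_eq_iff_mul_eq_one, ← hxy]
    group

theorem IsHalfCommutator.congr {φ : CentralPairing L} (hφ : IsHalfCommutator φ) (e : L ≃* L') :
    IsHalfCommutator (CentralPairing.congr e φ) where
  eq_one_of_mem_center {z} hz := by
    have hz' : e.symm z ∈ center L := (centerCongr e.symm ⟨z, hz⟩).2
    ext x
    simp [hφ.eq_one_of_mem_center hz']
  apply_swap x y := by
    ext
    simp [hφ.apply_swap (e.symm x)]

/-- Averaging: the product of the `φ i` has antisymmetrisation the `(2 m + 1)`-st power of the
commutator, and the antisymmetrisation of the commutator is its square. -/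
theorem isHalfCommutator_prod_mul_pow {ι : Type*} [Fintype ι] {φ : ι → CentralPairing L}
    (hφ : ∀ i, IsHalfCommutator (φ i)) {m : ℕ} (hm : Fintype.card ι = 2 * m + 1) :
    IsHalfCommutator ((∏ i, φ i) * commutatorPairing L ^ m) where
  eq_one_of_mem_center hz := by
    simp [commutatorPairing_eq_one_of_mem_center hz, (hφ _).eq_one_of_mem_center hz,
      Finset.prod_eq_one]
  apply_swap x y := by
    simp only [MonoidHom.mul_apply, MonoidHom.pow_apply, MonoidHom.finsetProd_apply,
      (hφ _).apply_swap x y, commutatorPairing_swap x y, inv_pow, Finset.prod_mul_distrib,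
      Finset.prod_const, Finset.card_univ, hm]
    rw [mul_inv_eq_iff_eq_mul, pow_succ', two_mul, pow_add]
    simp only [mul_assoc, mul_left_comm, mul_comm]

instance {ι : Type*} {L : ι → Type*} [∀ i, Group (L i)] [∀ i, ClassLETwo (L i)] :
    ClassLETwo (∀ i, L i) :=
  .of_commute fun x y z => funext fun i =>
    (ClassLETwo.commute_commutatorElement (x i) (y i) (z i)).eq

theorem exists_isHalfCommutator_pi {ι : Type*} {L : ι → Type*} [∀ i, Group (L i)]
    [∀ i, ClassLETwo (L i)] (h : ∀ i, ∃ φ : CentralPairing (L i), IsHalfCommutator φ) :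
    ∃ φ : CentralPairing (∀ i, L i), IsHalfCommutator φ := by
  choose φ hφ using h
  let ψ : CentralPairing (∀ i, L i) :=
    MonoidHom.mk' (fun x => MonoidHom.mk'
      (fun y => ⟨fun i => φ i (x i) (y i), by
        rw [Subgroup.center_pi]
        exact fun i _ => (φ i (x i) (y i)).2⟩)
      fun y z => by ext; simp) fun x y => by ext; simp
  have hψ (x y : ∀ i, L i) (i : ι) : (ψ x y : ∀ i, L i) i = φ i (x i) (y i) := rfl
  refine ⟨ψ, ⟨fun {z} hz => ?_, fun x y => ?_⟩⟩
  · rw [Subgroup.center_pi] at hz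
    ext x i
    simp [hψ, (hφ i).eq_one_of_mem_center (hz i trivial)]
  · ext i
    exact congrArg Subtype.val ((hφ i).apply_swap (x i) (y i))

/-- If `c(x, u) = z ^ b u` and `c(v, y) = z ^ a v` for `z = c(x, y)`, then `φ(u, v) = z ^ (a v b u)`
is a half-commutator; on the generators, it is nontrivial only at `(y, x)`. -/
theorem exists_isHalfCommutator_of_closure_pair {x y : L} (hxy : closure {x, y} = ⊤) :
    ∃ φ : CentralPairing L, IsHalfCommutator φ := by
  obtain ⟨c, hc⟩ : ∃ c, c = commutatorPairing L := ⟨_, rfl⟩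
  have c_self (u : L) : c u u = 1 := hc ▸ commutatorPairing_self u
  have exponent (f : L →* center L) (hfx : f x ∈ zpowers (c x y)) (hfy : f y ∈ zpowers (c x y))
      (u : L) : ∃ k : ℤ, c x y ^ k = f u :=
    have : closure {x, y} ≤ (zpowers (c x y)).comap f := by
      simpa [closure_le, Set.insert_subset_iff] using ⟨hfx, hfy⟩
    this (hxy ▸ mem_top u)
  choose b hb using exponent (c x) (by simp [c_self]) (mem_zpowers _)
  choose a ha using exponent (c.flip y) (mem_zpowers _) (by simp [c_self])
  have zpow_b (u v : L) : c v y ^ b u = c x u ^ a v := by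
    rw [← hb, ← MonoidHom.flip_apply, ← ha, ← zpow_mul, ← zpow_mul, mul_comm]
  let φ : CentralPairing L := MonoidHom.mk' (fun u => c.flip y ^ b u) fun u u' => by
    ext1 v
    simp [zpow_b, mul_zpow]
  have hφ (u v : L) : φ u v = c v y ^ b u := rfl
  refine ⟨φ, ⟨fun {z} hz => ?_, fun u v => ?_⟩⟩
  · ext1 v
    rw [hφ, zpow_b, hc, commutatorPairing_swap z x, commutatorPairing_eq_one_of_mem_center hz]
    simp
  · suffices h : φ.flip = c * φ by
      simpa [hc] using DFunLike.congr_fun (DFunLike.congr_fun h u) v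
    have swap_yx : c y x = (c x y)⁻¹ := hc ▸ commutatorPairing_swap x y
    refine MonoidHom.eq_of_eqOn_dense hxy fun u hu => MonoidHom.eq_of_eqOn_dense hxy fun v hv => ?_
    rw [MonoidHom.flip_apply, MonoidHom.mul_apply, MonoidHom.mul_apply]
    obtain rfl | rfl : u = x ∨ u = y := hu <;> obtain rfl | rfl : v = _ ∨ v = _ := hv <;>
      simp [hφ, c_self, hb, swap_yx]

end Constructions

section Invariance

theorem CentralPairing.congr_conj {L : Type*} [Group L] (φ : CentralPairing L) (u : L) :
    congr (MulAut.conj u) φ = φ := by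
  ext x y
  simp [mem_center_iff.1 (φ x y).2 u]

variable {G : Type*} [Group G] {L : Subgroup G} [L.Normal] [ClassLETwo L]

theorem IsHalfCommutator.exists_congr_conjNormal_eq {φ : CentralPairing L} (hφ : IsHalfCommutator φ)
    (hodd : Odd L.index) :
    ∃ ψ : CentralPairing L, IsHalfCommutator ψ ∧
      ∀ g : G, CentralPairing.congr (MulAut.conjNormal g) ψ = ψ := by
  obtain ⟨m, hm⟩ := hodd
  have : Finite (G ⧸ L) := Nat.finite_of_card_ne_zero (by rw [← index_eq_card, hm]; omega)
  have : Fintype (G ⧸ L) := .ofFinite _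
  have congr_conj_mul (g : G) (u : L) : CentralPairing.congr (MulAut.conjNormal (g * u)) φ =
      CentralPairing.congr (MulAut.conjNormal g) φ := by
    have : MulAut.conjNormal (u : G) = MulAut.conj u := by ext; simp
    rw [map_mul, CentralPairing.congr_mul, this, φ.congr_conj]
  let ψ : G ⧸ L → CentralPairing L := fun q => CentralPairing.congr (MulAut.conjNormal q.out) φ
  have hψ (g : G) (q : G ⧸ L) : CentralPairing.congr (MulAut.conjNormal g) (ψ q) = ψ (g * q) := by
    obtain ⟨u, hu⟩ := QuotientGroup.mk_out_eq_mul L (g * q.out)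
    have : ((g * q.out : G) : G ⧸ L) = g * q := by simp
    rw [← CentralPairing.congr_mul, ← map_mul, ← congr_conj_mul _ u, ← hu, this]
  refine ⟨_, isHalfCommutator_prod_mul_pow (φ := ψ) (m := m) (fun q => hφ.congr _) ?_,
    fun g => ?_⟩
  · rw [← hm, index_eq_card, Nat.card_eq_fintype_card]
  · simp only [map_mul, map_prod, map_pow, hψ, CentralPairing.congr_commutatorPairing]
    congr 1
    exact Equiv.prod_comp (Equiv.mulLeft (g : G ⧸ L)) ψ

end Invariance

/-! ### Elements of prime power order -/

/-- An element of `p`-power order. -/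
def IsPElement {G : Type*} [Group G] (p : ℕ) (x : G) : Prop := ∃ k : ℕ, x ^ p ^ k = 1

section PElement

variable {G : Type*} [Group G] {p : ℕ} {x : G}

theorem isPGroup_zpowers_iff : IsPGroup p (zpowers x) ↔ IsPElement p x := by
  refine ⟨fun h => ?_, fun ⟨k, hk⟩ => ?_⟩
  · obtain ⟨k, hk⟩ := isPGroup_iff_pow_pow_eq_one.1 h ⟨x, mem_zpowers x⟩
    exact ⟨k, congrArg Subtype.val hk⟩
  · refine isPGroup_iff_pow_pow_eq_one.2 fun ⟨_, i, hi⟩ => ⟨k, Subtype.ext ?_⟩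
    subst hi
    change (x ^ i) ^ p ^ k = 1
    rw [← zpow_natCast, zpow_comm, zpow_natCast, hk, one_zpow]

theorem isPElement_of_mem {P : Subgroup G} (hP : IsPGroup p P) (hx : x ∈ P) : IsPElement p x :=
  isPGroup_zpowers_iff.1 (hP.to_le ((zpowers_le).2 hx))

theorem isPElement_map_iff {G' : Type*} [Group G'] {f : G →* G'} (hf : Injective f) :
    IsPElement p (f x) ↔ IsPElement p x := by
  simp [IsPElement, ← map_pow, map_eq_one_iff f hf]

namespace IsPElement

variable (hx : IsPElement p x)
include hx

theorem map {G' : Type*} [Group G'] (f : G →* G') : IsPElement p (f x) :=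
  let ⟨k, hk⟩ := hx
  ⟨k, by rw [← map_pow, hk, map_one]⟩

theorem inv : IsPElement p x⁻¹ :=
  let ⟨k, hk⟩ := hx
  ⟨k, by rw [inv_pow, hk, inv_one]⟩

theorem mul {y : G} (hy : IsPElement p y) (hxy : Commute x y) : IsPElement p (x * y) := by
  obtain ⟨k, hk⟩ := hx
  obtain ⟨l, hl⟩ := hy
  refine ⟨k + l, ?_⟩
  rw [hxy.mul_pow, pow_add, pow_mul, hk, one_pow, one_mul, pow_mul', hl, one_pow]

theorem exists_mem_sylow : ∃ P : Sylow p G, x ∈ P := by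
  obtain ⟨P, hP⟩ := (isPGroup_zpowers_iff.2 hx).exists_le_sylow
  exact ⟨P, hP (mem_zpowers x)⟩

theorem eq_one_of_pow_eq_one {n : ℕ} (hpn : p.Coprime n) (hn : x ^ n = 1) : x = 1 := by
  obtain ⟨k, hk⟩ := hx
  rw [← pow_one x, ← (hpn.pow_left k).gcd_eq_one]
  exact pow_gcd_eq_one.2 ⟨hk, hn⟩

theorem mem_of_not_dvd_index [Fact p.Prime] {K : Subgroup G} [K.Normal] (hK : ¬p ∣ K.index) :
    x ∈ K := by
  rw [← QuotientGroup.eq_one_iff]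
  refine (hx.map (QuotientGroup.mk' K)).eq_one_of_pow_eq_one
    (((Fact.out : p.Prime).coprime_iff_not_dvd).2 hK) ?_
  exact (QuotientGroup.eq_one_iff _).2 (K.pow_index_mem x)

end IsPElement

theorem IsPElement.mem_sylow_of_mem_normal [Finite G] [Fact p.Prime] {L : Subgroup G} [L.Normal]
    [Group.IsNilpotent L] {x : L} (hx : IsPElement p x) (S : Sylow p G) : (x : G) ∈ S := by
  let P : Sylow p L := default
  have : (P : Subgroup L).Characteristic := P.characteristic_of_normal inferInstance
  have : ((P : Subgroup L).map L.subtype).Normal := ConjAct.normal_of_characteristic_of_normal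
  exact (P.2.map L.subtype).le_sylow_of_normal S
    (mem_map_of_mem L.subtype (hx.mem_of_not_dvd_index P.not_dvd_index))

theorem le_of_forall_isPElement_mem {A B : Subgroup G} [Finite A]
    (hAB : ∀ p : ℕ, p.Prime → ∀ x ∈ A, IsPElement p x → x ∈ B) : A ≤ B := by
  rw [← relIndex_eq_one]
  by_contra hne
  obtain ⟨p, hp, hdvd⟩ := Nat.exists_prime_and_dvd hne
  have : Fact p.Prime := ⟨hp⟩
  let P : Sylow p A := default
  have hPB : (P : Subgroup A) ≤ B.subgroupOf A := fun x hx =>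
    hAB p hp x x.2 ((isPElement_of_mem P.2 hx).map A.subtype)
  exact P.not_dvd_index (hdvd.trans (index_dvd_of_le hPB))

/-- The exponent is congruent to `1` modulo the `p`-part of `|G|` and divisible by the `p'`-part. -/
theorem exists_isPElement_pow (p : ℕ) [hp : Fact p.Prime] (G : Type*) [Group G] [Finite G] :
    ∃ e : ℕ, (∀ x : G, IsPElement p (x ^ e)) ∧ ∀ x : G, IsPElement p x → x ^ e = x := by
  obtain ⟨a, m, hm, hcard⟩ := Nat.exists_eq_pow_mul_and_not_dvd (Nat.card_pos (α := G)).ne' p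
    hp.out.ne_one
  have hpm : p.Coprime m := (hp.out.coprime_iff_not_dvd).2 hm
  have pow_card (x : G) : (x ^ m) ^ p ^ a = 1 := by
    rw [← pow_mul', ← hcard, pow_card_eq_one']
  obtain ⟨e, he, hme⟩ := Nat.chineseRemainder (hpm.pow_left a) 1 0
  obtain ⟨d, rfl⟩ := Nat.modEq_zero_iff_dvd.1 hme
  refine ⟨m * d, fun x => ⟨a, ?_⟩, fun x hx => ?_⟩
  · rw [pow_mul, pow_right_comm, pow_card, one_pow]
  · obtain ⟨k, hk⟩ := hx
    have hxa : x ^ p ^ a = 1 := by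
      refine IsPElement.eq_one_of_pow_eq_one ⟨k, ?_⟩ hpm (by rw [pow_right_comm, pow_card])
      rw [pow_right_comm, hk, one_pow]
    rw [pow_eq_pow_iff_modEq.2 (he.of_dvd (orderOf_dvd_of_pow_eq_one hxa)), pow_one]

end PElement

/-! ### Half-commutators on nilpotent groups -/

section ProperSubgroupsCommutative

variable {L : Type*} [Group L] [ClassLETwo L]

theorem exists_isHalfCommutator_of_odd_card (h : Odd (Nat.card L)) :
    ∃ φ : CentralPairing L, IsHalfCommutator φ := by
  obtain ⟨m, hm⟩ := h
  refine ⟨_, isHalfCommutator_commutatorPairing_pow (m := m) ?_⟩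
  ext x y
  rw [← hm, MonoidHom.pow_apply, MonoidHom.pow_apply, ← map_pow, pow_card_eq_one', map_one,
    MonoidHom.one_apply, MonoidHom.one_apply]

theorem exists_isHalfCommutator_of_forall_lt_top
    (h : ∀ Q : Subgroup L, Q < ⊤ → IsMulCommutative Q) :
    ∃ φ : CentralPairing L, IsHalfCommutator φ := by
  by_cases hcomm : ∀ x y : L, Commute x y
  · refine ⟨_, isHalfCommutator_commutatorPairing_pow (m := 0) ?_⟩
    ext x y
    simp [commutatorElement_eq_one_iff_commute.2 (hcomm x y)]
  · push Not at hcomm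
    obtain ⟨x, y, hxy⟩ := hcomm
    refine exists_isHalfCommutator_of_closure_pair (x := x) (y := y) ?_
    by_contra hne
    have := h _ (lt_top_iff_ne_top.2 hne)
    exact hxy (setLike_mul_comm (s := closure {x, y}) (subset_closure (by simp))
      (subset_closure (by simp)))

end ProperSubgroupsCommutative

theorem isMulCommutative_of_map {G G' : Type*} [Group G] [Group G'] {f : G →* G'}
    (hf : Injective f) {H : Subgroup G} (hH : IsMulCommutative (H.map f)) :
    IsMulCommutative H := by
  have := comap_injective_isMulCommutative (H.map f) hf
  rwa [comap_map_eq_self_of_injective hf] at this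

/-- The hypothesis on Sylow subgroups for which the main induction works, phrased for all
`p`-subgroups so that it visibly passes to subgroups. -/
structure HasAdmissibleSylows (G : Type*) [Group G] : Prop where
  classLETwo {p : ℕ} (hp : p.Prime) {P : Subgroup G} (hP : IsPGroup p P) : ClassLETwo P
  isMulCommutative_of_lt {P Q : Subgroup G} (hP : IsPGroup 2 P) (hQP : Q < P) : IsMulCommutative Q

namespace HasAdmissibleSylows

variable {G : Type*} [Group G] (hG : HasAdmissibleSylows G)
include hG

theorem subgroup (H : Subgroup G) : HasAdmissibleSylows H where
  classLETwo hp P hP :=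
    have := hG.classLETwo hp (hP.map H.subtype)
    .of_injective (f := (P.equivMapOfInjective H.subtype H.subtype_injective).toMonoidHom)
      (P.equivMapOfInjective H.subtype H.subtype_injective).injective
  isMulCommutative_of_lt hP hQP := isMulCommutative_of_map H.subtype_injective <|
    hG.isMulCommutative_of_lt (hP.map H.subtype) (map_subtype_lt_map_subtype.2 hQP)

theorem classLETwo_of_isNilpotent [Finite G] [hnil : Group.IsNilpotent G] : ClassLETwo G := by
  obtain ⟨e⟩ := (Group.isNilpotent_of_finite_tfae.out 0 4).1 hnil
  have (p : (Nat.card G).primeFactors) (P : Sylow p G) : ClassLETwo P :=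
    hG.classLETwo (Nat.prime_of_mem_primeFactors p.2) P.2
  exact .of_injective (f := e.symm.toMonoidHom) e.symm.injective

theorem exists_isHalfCommutator_sylow [Finite G] {p : ℕ} (hp : p.Prime) (P : Sylow p G)
    [ClassLETwo P] : ∃ φ : CentralPairing P, IsHalfCommutator φ := by
  obtain rfl | hp2 := hp.eq_two_or_odd'
  · refine exists_isHalfCommutator_of_forall_lt_top fun Q hQ => ?_
    exact (hG.subgroup P).isMulCommutative_of_lt (IsPGroup.of_equiv P.2 topEquiv.symm) hQ
  · have : Fact p.Prime := ⟨hp⟩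
    refine exists_isHalfCommutator_of_odd_card ?_
    obtain ⟨n, hn⟩ := IsPGroup.iff_card.1 P.2
    exact hn ▸ hp2.pow

theorem exists_isHalfCommutator [Finite G] [hnil : Group.IsNilpotent G] [ClassLETwo G] :
    ∃ φ : CentralPairing G, IsHalfCommutator φ := by
  obtain ⟨e⟩ := (Group.isNilpotent_of_finite_tfae.out 0 4).1 hnil
  have (p : (Nat.card G).primeFactors) (P : Sylow p G) : ClassLETwo P :=
    hG.classLETwo (Nat.prime_of_mem_primeFactors p.2) P.2
  obtain ⟨φ, hφ⟩ := exists_isHalfCommutator_pi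
    fun p : (Nat.card G).primeFactors => exists_isHalfCommutator_pi fun P : Sylow p G =>
      hG.exists_isHalfCommutator_sylow (Nat.prime_of_mem_primeFactors p.2) P
  exact ⟨_, hφ.congr e⟩

/-- If `|G : L|` is even, then a Sylow `2`-subgroup of `L` is not one of `G`. -/
theorem isMulCommutative_sylow_two_of_even_index [Finite G] {L : Subgroup G} (heven : Even L.index)
    (P : Sylow 2 L) : IsMulCommutative P := by
  obtain ⟨S, hS⟩ := (P.2.map L.subtype).exists_le_sylow
  have hne : (P : Subgroup L).map L.subtype ≠ S := fun h => by
    refine S.not_dvd_index ?_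
    rw [← h, index_map_subtype]
    exact heven.two_dvd.mul_left _
  exact isMulCommutative_of_map L.subtype_injective
    (hG.isMulCommutative_of_lt S.2 (lt_of_le_of_ne hS hne))

theorem exists_invariant_isHalfCommutator [Finite G] (L : Subgroup G) [L.Normal]
    [hnil : Group.IsNilpotent L] [ClassLETwo L] :
    ∃ φ : CentralPairing L, IsHalfCommutator φ ∧
      ∀ g : G, CentralPairing.congr (MulAut.conjNormal g) φ = φ := by
  obtain heven | hodd := Nat.even_or_odd L.index
  · let P : Sylow 2 L := default
    have hcomm : IsMulCommutative P := hG.isMulCommutative_sylow_two_of_even_index heven P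
    have hPodd : Odd (P : Subgroup L).index :=
      Nat.not_even_iff_odd.1 fun h => P.not_dvd_index h.two_dvd
    obtain ⟨m, hm⟩ := hPodd.mul hPodd
    refine ⟨_, isHalfCommutator_commutatorPairing_pow (m := m) ?_, fun g => by
      rw [map_pow, CentralPairing.congr_commutatorPairing]⟩
    have hP (x : L) := (P : Subgroup L).pow_index_mem x
    rw [← hm, pow_mul]
    ext x y
    simp only [MonoidHom.pow_apply]
    rw [← map_pow, ← MonoidHom.pow_apply, ← map_pow, coe_commutatorPairing,
      commutatorElement_eq_one_iff_mul_comm.2 (setLike_mul_comm (hP x) (hP y))]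
    rfl
  · obtain ⟨φ, hφ⟩ := (hG.subgroup L).exists_isHalfCommutator
    exact hφ.exists_congr_conjNormal_eq hodd

end HasAdmissibleSylows

/-! ### Centers of Sylow subgroups and coprime action -/

/-- The intersection of the centers of the Sylow `p`-subgroups, described through its elements: the
`p`-elements which commute with all `p`-elements. -/
def sylowCenterCore (p : ℕ) (G : Type*) [Group G] : Subgroup G where
  carrier := {t | IsPElement p t ∧ ∀ s, IsPElement p s → Commute t s}
  one_mem' := ⟨⟨0, one_pow _⟩, fun s _ => .one_left s⟩
  mul_mem' ht hu :=
    ⟨ht.1.mul hu.1 (ht.2 _ hu.1), fun s hs => (ht.2 s hs).mul_left (hu.2 s hs)⟩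
  inv_mem' ht := ⟨ht.1.inv, fun s hs => (ht.2 s hs).inv_left⟩

namespace sylowCenterCore

variable {p : ℕ} {G : Type*} [Group G]

instance : (sylowCenterCore p G).Normal where
  conj_mem t ht g := by
    refine ⟨ht.1.map (MulAut.conj g).toMonoidHom, fun s hs => ?_⟩
    have := (ht.2 _ (hs.map (MulAut.conj g⁻¹).toMonoidHom)).map (MulAut.conj g)
    simpa [mul_assoc] using this

instance : IsMulCommutative (sylowCenterCore p G) :=
  .of_comm fun t u => Subtype.ext (t.2.2 u u.2.1)

theorem isPGroup : IsPGroup p (sylowCenterCore p G) :=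
  isPGroup_iff_pow_pow_eq_one.2 fun ⟨_, ⟨k, hk⟩, _⟩ => ⟨k, Subtype.ext hk⟩

theorem subgroupOf_le (H : Subgroup G) :
    (sylowCenterCore p G).subgroupOf H ≤ sylowCenterCore p H := fun _ ht =>
  ⟨(isPElement_map_iff H.subtype_injective).1 ht.1,
    fun s hs => H.subtype_injective (ht.2 s (hs.map H.subtype))⟩

theorem le_centralizer_of_isPGroup {Q : Subgroup G} (hQ : IsPGroup p Q) :
    sylowCenterCore p G ≤ centralizer Q :=
  fun _ ht x hx => (ht.2 x (isPElement_of_mem hQ hx)).symm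

variable [Finite G] [Fact p.Prime]

theorem le_centralizer_of_classLETwo (L : Subgroup G) [L.Normal] [ClassLETwo L] :
    sylowCenterCore p G ≤ centralizer L := by
  obtain ⟨e, isPElement_pow, pow_eq_self⟩ := exists_isPElement_pow p G
  have commutator_mem {t l : G} (ht : t ∈ sylowCenterCore p G) (hl : l ∈ L) :
      ⁅t, l⁆ ∈ sylowCenterCore p G ⊓ L :=
    commutator_le_inf _ _ (commutator_mem_commutator ht hl)
  have commute_of_commute_commutator {t l : G} (ht : t ∈ sylowCenterCore p G) (hl : l ∈ L)
      (htl : Commute ⁅t, l⁆ l) : Commute t l := by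
    rw [← commutatorElement_eq_one_iff_commute, ← mul_eq_right (b := l ^ e)]
    calc ⁅t, l⁆ * l ^ e = (⁅t, l⁆ * l) ^ e := by
          rw [htl.mul_pow, pow_eq_self _ (commutator_mem ht hl).1.1]
      _ = t * l ^ e * t⁻¹ := by rw [← conj_pow, commutatorElement_def, inv_mul_cancel_right]
      _ = l ^ e := by rw [(ht.2 _ (isPElement_pow l)).eq, mul_inv_cancel_right]
  intro t ht l hl
  obtain ⟨hcore, hL⟩ := commutator_mem ht hl
  refine (commute_of_commute_commutator ht hl
    (commute_of_commute_commutator hcore hl ?_)).symm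
  simpa using (ClassLETwo.commute_commutatorElement (⟨_, hL⟩ : L) ⟨l, hl⟩ ⟨l, hl⟩).map L.subtype

theorem subgroupOf_le_center (L : Subgroup G) [L.Normal] [ClassLETwo L] :
    (sylowCenterCore p G).subgroupOf L ≤ center L := fun _ ht =>
  mem_center_iff.2 fun l => Subtype.ext (le_centralizer_of_classLETwo L ht l l.2)

theorem mem_of_mem_commutator (hG : ∀ S : Sylow p G, ClassLETwo S) {L : Subgroup G} [L.Normal]
    [Group.IsNilpotent L] [ClassLETwo L] {k : L} (hk : k ∈ commutator L) (hkp : IsPElement p k) :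
    (k : G) ∈ sylowCenterCore p G := by
  refine ⟨hkp.map L.subtype, fun s hs => ?_⟩
  obtain ⟨S, hsS⟩ := hs.exists_mem_sylow
  obtain ⟨e, isPElement_pow, pow_eq_self⟩ := exists_isPElement_pow p L
  have pow_mem (u : L) : (u ^ e : L) ∈ (S : Subgroup G).comap L.subtype :=
    (isPElement_pow u).mem_sylow_of_mem_normal S
  -- `⁅u, v⁆ ^ (e * e)` is the commutator of the `p`-parts of `u` and `v`.
  suffices h : commutator L ≤ ((centralizer {s}).comap (L.subtype.comp
      ((center L).subtype.comp (powMonoidHom (e * e))))).map (center L).subtype by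
    obtain ⟨z, hz, rfl⟩ := h hk
    have pow_mul_self : ((center L).subtype z) ^ (e * e) = (center L).subtype z := by
      rw [pow_mul, pow_eq_self _ hkp, pow_eq_self _ hkp]
    rw [← pow_mul_self]
    exact mem_centralizer_singleton_iff.1 hz
  refine commutator_le.2 fun u _ v _ => ⟨commutatorPairing L u v, ?_, rfl⟩
  have pow_pairing : commutatorPairing L u v ^ (e * e) = commutatorPairing L (u ^ e) (v ^ e) := by
    rw [pow_mul, ← map_pow, ← MonoidHom.pow_apply, ← map_pow]
  refine mem_centralizer_singleton_iff.2 ?_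
  change ((commutatorPairing L u v ^ (e * e) : center L) : G) * s =
    s * (commutatorPairing L u v ^ (e * e) : center L)
  rw [pow_pairing]
  exact congrArg (S : Subgroup G).subtype
    (ClassLETwo.commute_commutatorElement ⟨_, pow_mem u⟩ ⟨_, pow_mem v⟩ ⟨s, hsS⟩).eq

end sylowCenterCore

theorem inf_centralizer_le_commutator {G : Type*} [Group G] {L Q : Subgroup G} [L.Normal] [Finite Q]
    (hLQ : L ≤ ⁅L, Q⁆) (hcop : (Nat.card L).Coprime (Nat.card Q)) :
    L ⊓ centralizer Q ≤ ⁅L, L⁆ := by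
  have : Fintype Q := .ofFinite _
  -- `⁅L, Q⁆ = L` kills the trace of `Q` on `L / L'`, which is `l ↦ l ^ |Q|` on fixed points.
  let tr : L →* Abelianization L :=
    ∏ x : Q, Abelianization.of.comp (MulAut.conjNormal (x : G)).toMonoidHom
  have tr_apply (l : L) : tr l = ∏ x : Q, Abelianization.of (MulAut.conjNormal (x : G) l) := by
    simp [tr]
  have tr_conj (y : Q) (l : L) : tr (MulAut.conjNormal (y : G) l) = tr l := by
    rw [tr_apply, tr_apply]
    exact Fintype.prod_equiv (Equiv.mulRight y) _ _ fun x => by simp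
  have tr_eq_one (l : L) : tr l = 1 := by
    suffices h : ⁅L, Q⁆ ≤ tr.ker.map L.subtype by
      obtain ⟨l', hl', hll'⟩ := h (hLQ l.2)
      rwa [← L.subtype_injective hll']
    refine commutator_le.2 fun l hl y hy =>
      ⟨⟨l, hl⟩ * (MulAut.conjNormal y ⟨l, hl⟩)⁻¹, ?_, by simp [commutatorElement_def, mul_assoc]⟩
    rw [SetLike.mem_coe, MonoidHom.mem_ker, map_mul, map_inv, tr_conj ⟨y, hy⟩, mul_inv_cancel]
  rintro k ⟨hkL, hkQ⟩
  have pow_card_eq_one : Abelianization.of (⟨k, hkL⟩ : L) ^ Nat.card Q = 1 := by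
    rw [← tr_eq_one ⟨k, hkL⟩, tr_apply, Nat.card_eq_fintype_card, ← Finset.card_univ,
      ← Finset.prod_const]
    refine Finset.prod_congr rfl fun x _ => congrArg _ (Subtype.ext ?_)
    simp [hkQ x x.2]
  have of_eq_one : Abelianization.of (⟨k, hkL⟩ : L) = 1 := by
    rw [← pow_one (Abelianization.of _), ← hcop.gcd_eq_one]
    exact pow_gcd_eq_one.2 ⟨by rw [← map_pow, pow_card_eq_one', map_one], pow_card_eq_one⟩
  rw [← MonoidHom.mem_ker, Abelianization.ker_of] at of_eq_one
  exact map_subtype_commutator L ▸ mem_map_of_mem L.subtype of_eq_one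

theorem le_commutator_sup_inf_centralizer {G : Type*} [Group G] {E Q : Subgroup G} [E.Normal]
    [IsMulCommutative E] [Finite Q] (hcop : (Nat.card E).Coprime (Nat.card Q)) :
    E ≤ ⁅E, Q⁆ ⊔ E ⊓ centralizer Q := by
  have : Fintype Q := .ofFinite _
  intro t ht
  obtain ⟨r, hr⟩ := (powCoprime hcop).surjective ⟨t, ht⟩
  let l : E := ∏ x : Q, r * (MulAut.conjNormal (x : G) r)⁻¹
  let h : E := ∏ x : Q, MulAut.conjNormal (x : G) r
  have hlh : l * h = ⟨t, ht⟩ := by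
    rw [← hr]
    simp [l, h, powCoprime, Finset.prod_mul_distrib]
  have hl : l ∈ ⁅E, Q⁆.subgroupOf E := prod_mem fun x _ => by
    simpa [mem_subgroupOf, commutatorElement_def, mul_assoc] using
      commutator_mem_commutator r.2 x.2
  have hh : (h : G) ∈ centralizer Q := by
    intro x hx
    have conj_h : MulAut.conjNormal x h = h := by
      rw [map_prod]
      exact Fintype.prod_equiv (Equiv.mulLeft ⟨x, hx⟩) _ _ fun y => by simp
    rw [← mul_inv_eq_iff_eq_mul, ← MulAut.conjNormal_apply, conj_h]
  rw [show t = l * h from (congrArg Subtype.val hlh).symm]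
  exact mul_mem (mem_sup_left hl) (mem_sup_right ⟨h.2, hh⟩)

/-! ### The Frattini argument -/

theorem characteristic_of_coprime_index {G : Type*} [Group G] {K : Subgroup G} [K.Normal]
    (hK : (Nat.card K).Coprime K.index) : K.Characteristic := by
  refine characteristic_iff_le_comap.2 fun φ x hx => ?_
  have pow_card : x ^ Nat.card K = 1 :=
    congrArg Subtype.val (pow_card_eq_one' (x := (⟨x, hx⟩ : K)))
  change φ x ∈ K
  rw [← QuotientGroup.eq_one_iff, ← pow_one (φ x : G ⧸ K), ← hK.gcd_eq_one]
  refine pow_gcd_eq_one.2 ⟨?_, (QuotientGroup.eq_one_iff _).2 (K.pow_index_mem _)⟩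
  rw [← QuotientGroup.mk_pow, ← map_pow, pow_card, map_one, QuotientGroup.mk_one]

theorem exists_characteristic_coprime_card (q : ℕ) [hq : Fact q.Prime] (L : Type*) [Group L]
    [Finite L] [hL : Group.IsNilpotent L] :
    ∃ K : Subgroup L, K.Characteristic ∧ q.Coprime (Nat.card K) ∧ ∃ n, K.index = q ^ n := by
  by_cases hqL : q ∣ Nat.card L
  · obtain ⟨e⟩ := (Group.isNilpotent_of_finite_tfae.out 0 4).1 hL
    let P : Sylow q L := default
    let q' : (Nat.card L).primeFactors :=
      ⟨q, Nat.mem_primeFactors.2 ⟨hq.out, hqL, Nat.card_pos.ne'⟩⟩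
    let f : L →* P :=
      (Pi.evalMonoidHom _ P).comp ((Pi.evalMonoidHom _ q').comp e.symm.toMonoidHom)
    have hf : Surjective f :=
      (surjective_eval P).comp ((surjective_eval _).comp e.symm.surjective)
    have index_ker : f.ker.index = Nat.card P := by
      rw [Subgroup.index_ker, f.range_eq_top.2 hf, card_top]
    have card_ker : Nat.card f.ker = (P : Subgroup L).index := by
      refine Nat.eq_of_mul_eq_mul_right (Nat.card_pos (α := P)) ?_
      rw [← index_ker, card_mul_index, index_ker, index_mul_card]
    have coprime : q.Coprime (Nat.card f.ker) :=
      card_ker ▸ (hq.out.coprime_iff_not_dvd).2 P.not_dvd_index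
    obtain ⟨n, hn⟩ := IsPGroup.iff_card.1 P.2
    rw [hn] at index_ker
    exact ⟨f.ker, characteristic_of_coprime_index (index_ker ▸ (coprime.pow_left n).symm), coprime,
      n, index_ker⟩
  · exact ⟨⊤, inferInstance, card_top (G := L) ▸ (hq.out.coprime_iff_not_dvd).2 hqL, 0, index_top⟩

/-- A normal nilpotent `q'`-subgroup `L` such that the `q`-group `Q` is a Sylow subgroup of a normal
subgroup `LQ`, so that the Frattini argument gives `G = L N(Q)`. -/
structure IsFrattiniKernel {G : Type*} [Group G] (q : ℕ) (Q L : Subgroup G) : Prop where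
  isPGroup : IsPGroup q Q
  normal : L.Normal
  isNilpotent : Group.IsNilpotent L
  coprime_card : q.Coprime (Nat.card L)
  normal_sup : (L ⊔ Q).Normal

namespace IsFrattiniKernel

variable {G : Type*} [Group G] [Finite G] {q : ℕ} [Fact q.Prime] {Q L : Subgroup G}
  (hL : IsFrattiniKernel q Q L)
include hL

theorem coprime : (Nat.card L).Coprime (Nat.card Q) := by
  obtain ⟨n, hn⟩ := IsPGroup.iff_card.1 hL.isPGroup
  exact hn ▸ (hL.coprime_card.pow_left n).symm

theorem disjoint : Disjoint L Q := disjoint_of_coprime_natCard hL.coprime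

theorem relIndex_sup_left_eq : L.relIndex (L ⊔ Q) = Nat.card Q := by
  have := hL.normal
  rw [relIndex_sup_left, ← inf_relIndex_right, hL.disjoint.eq_bot, relIndex_bot_left]

theorem relIndex_sup_right_eq : Q.relIndex (L ⊔ Q) = Nat.card L := by
  refine Nat.eq_of_mul_eq_mul_left (Nat.card_pos (α := Q)) ?_
  calc Nat.card Q * Q.relIndex (L ⊔ Q) = Nat.card (L ⊔ Q : Subgroup G) := by
        rw [← relIndex_bot_left, relIndex_mul_relIndex _ _ _ bot_le le_sup_right,
          relIndex_bot_left]
    _ = Nat.card L * L.relIndex (L ⊔ Q) := by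
        rw [← relIndex_bot_left, ← relIndex_bot_left,
          relIndex_mul_relIndex _ _ _ bot_le le_sup_left]
    _ = Nat.card Q * Nat.card L := by rw [hL.relIndex_sup_left_eq, mul_comm]

theorem sup_normalizer_eq_top : L ⊔ normalizer (Q : Set G) = ⊤ := by
  have := hL.normal_sup
  have hQ : IsPGroup q (Q.subgroupOf (L ⊔ Q)) := hL.isPGroup.comap_subtype
  have not_dvd : ¬q ∣ (Q.subgroupOf (L ⊔ Q)).index := by
    rw [← relIndex, hL.relIndex_sup_right_eq, ← (Fact.out : q.Prime).coprime_iff_not_dvd]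
    exact hL.coprime_card
  have frattini := (hQ.toSylow not_dvd).normalizer_sup_eq_top
  rw [IsPGroup.toSylow_coe, map_subgroupOf_eq_of_le le_sup_right] at frattini
  rw [eq_top_iff, ← frattini]
  exact sup_le le_sup_right (sup_le le_sup_left (le_normalizer.trans le_sup_right))

theorem normal_commutator : ⁅L, Q⁆.Normal := by
  have := hL.normal
  have normalizer_le : normalizer (Q : Set G) ≤ normalizer (⁅L, Q⁆ : Subgroup G) := fun n hn => by
    rw [mem_normalizer_iff_map_conj_eq] at hn ⊢
    rw [map_commutator, hn, Normal.map_conj_eq]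
  rw [← normalizer_eq_top_iff, eq_top_iff, ← hL.sup_normalizer_eq_top]
  exact sup_le (normalizer_commutator_ge_left L Q) normalizer_le

theorem normal_commutator_sup : (⁅L, Q⁆ ⊔ Q).Normal := by
  have := hL.normal_commutator
  have le_normalizer_left : L ≤ normalizer (⁅L, Q⁆ ⊔ Q : Subgroup G) := by
    refine le_normalizer_iff.2 fun l hl => ?_
    change ⁅L, Q⁆ ⊔ Q ≤ (⁅L, Q⁆ ⊔ Q).comap (MulAut.conj l).toMonoidHom
    refine sup_le (fun c hc => mem_sup_left (Normal.conj_mem inferInstance c hc l)) fun x hx => ?_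
    change l * x * l⁻¹ ∈ ⁅L, Q⁆ ⊔ Q
    rw [← inv_mul_cancel_right (l * x * l⁻¹) x, ← commutatorElement_def]
    exact mul_mem_sup (commutator_mem_commutator hl hx) hx
  have le_normalizer_right : normalizer (Q : Set G) ≤ normalizer (⁅L, Q⁆ ⊔ Q : Subgroup G) := by
    refine le_trans (le_inf ?_ le_rfl) (normalizer_inf_normalizer_le_normalizer_sup _ _)
    exact le_top.trans (normalizer_eq_top (H := ⁅L, Q⁆)).ge
  rw [← normalizer_eq_top_iff, eq_top_iff, ← hL.sup_normalizer_eq_top]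
  exact sup_le le_normalizer_left le_normalizer_right

theorem commutator : IsFrattiniKernel q Q ⁅L, Q⁆ :=
  have := hL.normal
  have := hL.isNilpotent
  have hle : ⁅L, Q⁆ ≤ L := commutator_le_left L Q
  { isPGroup := hL.isPGroup
    normal := hL.normal_commutator
    isNilpotent := (Group.isNilpotent_congr (subgroupOfEquivOfLe hle)).1 inferInstance
    coprime_card := hL.coprime_card.coprime_dvd_right (card_dvd_of_le hle)
    normal_sup := hL.normal_commutator_sup }

end IsFrattiniKernel

theorem characteristic_commutator_sup_sylow {G : Type*} [Group G] [Finite G] {q : ℕ}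
    [Fact q.Prime] (P : Sylow q G) : (commutator G ⊔ P).Characteristic := by
  have : (commutator G ⊔ P).Normal := .of_commutator_le G le_sup_left
  have not_dvd : ¬q ∣ (commutator G ⊔ P).index := fun h =>
    P.not_dvd_index (h.trans (index_dvd_of_le le_sup_right))
  refine characteristic_iff_le_comap.2 fun φ => sup_le ?_ fun x hx => ?_
  · exact (characteristic_iff_le_comap.1 inferInstance φ).trans (comap_mono le_sup_left)
  · exact ((isPElement_of_mem P.2 hx).map φ.toMonoidHom).mem_of_not_dvd_index not_dvd

theorem le_map_subtype_sup_sylow {G : Type*} [Group G] [Finite G] {q : ℕ} [hq : Fact q.Prime]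
    {N : Subgroup G} [N.Normal] [Group.IsNilpotent N] {K : Subgroup N} [K.Normal] {n : ℕ}
    (hK : K.index = q ^ n) (P : Sylow q G) : N ≤ K.map N.subtype ⊔ P := by
  refine le_of_forall_isPElement_mem fun p hp x hxN hx => ?_
  have : Fact p.Prime := ⟨hp⟩
  lift x to N using hxN
  replace hx := (isPElement_map_iff N.subtype_injective).1 hx
  obtain rfl | hpq := eq_or_ne p q
  · exact mem_sup_right (hx.mem_sylow_of_mem_normal P)
  · refine mem_sup_left (mem_map_of_mem _ (hx.mem_of_not_dvd_index ?_))
    rw [hK, ← hp.coprime_iff_not_dvd]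
    exact ((Nat.coprime_primes hp hq.out).2 hpq).pow_right n

theorem exists_isFrattiniKernel_map_sylow {G : Type*} [Group G] [Finite G] {q : ℕ} [Fact q.Prime]
    {M : Subgroup G} [M.Normal] [Group.IsNilpotent (commutator M)] (P : Sylow q M) :
    ∃ L, IsFrattiniKernel q ((P : Subgroup M).map M.subtype) L := by
  obtain ⟨K, hK, hqK, n, hn⟩ := exists_characteristic_coprime_card q (commutator M)
  let L : Subgroup M := K.map (commutator M).subtype
  have sup_eq : L ⊔ P = commutator M ⊔ P := le_antisymm
    (sup_le_sup_right (map_subtype_le K) _) (sup_le (le_map_subtype_sup_sylow hn P) le_sup_right)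
  have : (L ⊔ P).Characteristic := sup_eq ▸ characteristic_commutator_sup_sylow P
  have equiv : K ≃* L.map M.subtype :=
    (K.equivMapOfInjective _ (commutator M).subtype_injective).trans
      (L.equivMapOfInjective _ M.subtype_injective)
  exact ⟨L.map M.subtype,
    { isPGroup := P.2.map M.subtype
      normal := ConjAct.normal_of_characteristic_of_normal
      isNilpotent := (Group.isNilpotent_congr equiv).1 inferInstance
      coprime_card := Nat.card_congr equiv.toEquiv ▸ hqK
      normal_sup := map_sup L _ M.subtype ▸ ConjAct.normal_of_characteristic_of_normal }⟩

theorem exists_isFrattiniKernel_of_not_isNilpotent {G : Type*} [Group G] [Finite G]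
    [Group.IsSolvable G] (hG : ¬Group.IsNilpotent G) : ∃ q, q.Prime ∧ ∃ Q : Subgroup G,
      ¬Q.Normal ∧ ∃ L, IsFrattiniKernel q Q L ∧ L ≤ ⁅L, Q⁆ := by
  obtain ⟨M, ⟨hMn, hM⟩, hmin⟩ := exists_minimal_of_wellFoundedLT
    (fun M : Subgroup G => M.Normal ∧ ¬Group.IsNilpotent M)
    ⟨⊤, inferInstance, fun h => hG ((Group.isNilpotent_congr topEquiv).1 h)⟩
  have hM' : Group.IsNilpotent (commutator M) := by
    by_contra h
    have ne_bot : M ≠ ⊥ := by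
      rintro rfl
      exact hM inferInstance
    have not_isNilpotent : ¬Group.IsNilpotent (⁅M, M⁆ : Subgroup G) := by
      rw [← map_subtype_commutator]
      exact fun h' => h ((Group.isNilpotent_congr
        ((commutator M).equivMapOfInjective _ M.subtype_injective)).2 h')
    have lt := Group.IsSolvable.commutator_lt_of_ne_bot ne_bot
    exact lt.not_ge (hmin ⟨inferInstance, not_isNilpotent⟩ lt.le)
  obtain ⟨q, hq, P, hP⟩ : ∃ q, ∃ _ : Fact q.Prime, ∃ P : Sylow q M, ¬(P : Subgroup M).Normal := by
    by_contra! h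
    exact hM ((Group.isNilpotent_of_finite_tfae.out 0 3).2 h)
  obtain ⟨L, hL, hLmin⟩ := exists_minimal_of_wellFoundedLT _ (exists_isFrattiniKernel_map_sylow P)
  have := hL.normal
  refine ⟨q, hq.out, _, fun hQ => hP ?_, L, hL, hLmin hL.commutator (commutator_le_left L _)⟩
  rw [← comap_map_eq_self_of_injective M.subtype_injective (P : Subgroup M)]
  infer_instance

/-! ### The induction -/

theorem inf_normalizer_le_centralizer {G : Type*} [Group G] {L Q : Subgroup G} [L.Normal]
    (hdisj : Disjoint L Q) : L ⊓ normalizer (Q : Set G) ≤ centralizer Q := by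
  rintro k ⟨hkL, hkN⟩ x hx
  have mem_L : ⁅k, x⁆ ∈ L := commutator_le_left L Q (commutator_mem_commutator hkL hx)
  have mem_Q : ⁅k, x⁆ ∈ Q := mul_mem ((mem_normalizer_iff.1 hkN x).1 hx) (inv_mem hx)
  exact (commutatorElement_eq_one_iff_mul_comm.1 (disjoint_def.1 hdisj mem_L mem_Q)).symm

namespace IsFrattiniKernel

variable {G : Type*} [Group G] [Finite G] {q : ℕ} [hq : Fact q.Prime] {Q L : Subgroup G}
  (hL : IsFrattiniKernel q Q L)
include hL

theorem inf_normalizer_le_commutator (hLQ : L ≤ ⁅L, Q⁆) :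
    L ⊓ normalizer (Q : Set G) ≤ ⁅L, L⁆ :=
  have := hL.normal
  (le_inf inf_le_left (inf_normalizer_le_centralizer hL.disjoint)).trans
    (inf_centralizer_le_commutator hLQ hL.coprime)

theorem mem_of_isPElement {p : ℕ} (hp : p.Prime) (hpq : p ≠ q) {x : G} (hxLQ : x ∈ L ⊔ Q)
    (hx : IsPElement p x) : x ∈ L := by
  have : Fact p.Prime := ⟨hp⟩
  have := hL.normal
  lift x to (L ⊔ Q : Subgroup G) using hxLQ
  refine ((isPElement_map_iff (L ⊔ Q).subtype_injective).1 hx).mem_of_not_dvd_index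
    (K := L.subgroupOf (L ⊔ Q)) ?_
  obtain ⟨n, hn⟩ := IsPGroup.iff_card.1 hL.isPGroup
  rw [← relIndex, hL.relIndex_sup_left_eq, hn, ← hp.coprime_iff_not_dvd]
  exact ((Nat.coprime_primes hp hq.out).2 hpq).pow_right n

theorem sylowCenterCore_le_sup {p : ℕ} (hp : p.Prime) : sylowCenterCore p G ≤
    sylowCenterCore p G ⊓ L ⊔ sylowCenterCore p G ⊓ centralizer Q := by
  obtain rfl | hpq := eq_or_ne p q
  · exact le_sup_of_le_right
      (le_inf le_rfl (sylowCenterCore.le_centralizer_of_isPGroup hL.isPGroup))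
  · have : Fact p.Prime := ⟨hp⟩
    have := hL.normal_sup
    have commutator_le : ⁅sylowCenterCore p G, Q⁆ ≤ sylowCenterCore p G ⊓ L := fun x hx => by
      have hxE := commutator_le_left _ _ hx
      exact ⟨hxE, hL.mem_of_isPElement hp hpq
        (commutator_le_right _ (L ⊔ Q) (commutator_mono le_rfl le_sup_right hx)) hxE.1⟩
    exact (le_commutator_sup_inf_centralizer (IsPGroup.coprime_card_of_ne p q hpq _ _
      sylowCenterCore.isPGroup hL.isPGroup)).trans (sup_le_sup_right commutator_le _)

end IsFrattiniKernel

theorem subgroupOf_le_socle {G : Type*} [Group G] [Finite G] (hG : HasAdmissibleSylows G)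
    {L H : Subgroup G} [L.Normal] [Group.IsNilpotent L] [ClassLETwo L] (hLH : L ⊓ H ≤ ⁅L, L⁆)
    [LeftBrace H] (hH : ∀ p : ℕ, p.Prime → sylowCenterCore p H ≤ LeftBrace.socle H) :
    L.subgroupOf H ≤ LeftBrace.socle H := by
  refine le_of_forall_isPElement_mem fun p hp k hkL hk => ?_
  have : Fact p.Prime := ⟨hp⟩
  have mem_commutator : (⟨k, hkL⟩ : L) ∈ commutator L := by
    rw [← mem_map_iff_mem L.subtype_injective, map_subtype_commutator]
    exact hLH ⟨hkL, k.2⟩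
  have mem_core : (k : G) ∈ sylowCenterCore p G :=
    sylowCenterCore.mem_of_mem_commutator (k := (⟨k, hkL⟩ : L))
      (fun S => hG.classLETwo hp S.isPGroup') mem_commutator
      ((isPElement_map_iff L.subtype_injective).1 (hk.map H.subtype))
  exact hH p hp (sylowCenterCore.subgroupOf_le H mem_core)

/-- `G` is the multiplicative group of a left brace whose socle contains every `sylowCenterCore`.
This strengthening of `IsIYB` is the inductive claim: the condition on the socle is what allows the
brace of a subgroup to be glued to that of a normal subgroup. -/
def HasCoreBrace (G : Type*) [Group G] : Prop :=
  ∃ _ : LeftBrace G, ∀ p : ℕ, p.Prime → sylowCenterCore p G ≤ LeftBrace.socle G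

theorem IsFrattiniKernel.hasCoreBrace {G : Type*} [Group G] [Finite G] {q : ℕ} [Fact q.Prime]
    {Q L : Subgroup G} (hG : HasAdmissibleSylows G) (hL : IsFrattiniKernel q Q L)
    (hLQ : L ≤ ⁅L, Q⁆) (hQ : HasCoreBrace (normalizer (Q : Set G))) : HasCoreBrace G := by
  have := hL.normal
  have := hL.isNilpotent
  have : ClassLETwo L := (hG.subgroup L).classLETwo_of_isNilpotent
  obtain ⟨_, hcore⟩ := hQ
  obtain ⟨φ, hφ, hinv⟩ := hG.exists_invariant_isHalfCommutator L
  let _ := hφ.leftBrace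
  have center_le : center L ≤ LeftBrace.socle L := hφ.center_le_socle
  have hLN := hL.inf_normalizer_le_commutator hLQ
  have subgroupOf_le_center : (normalizer (Q : Set G)).subgroupOf L ≤ center L := fun k hk => by
    refine ClassLETwo.commutator_le_center ?_
    rw [← mem_map_iff_mem L.subtype_injective, map_subtype_commutator]
    exact hLN ⟨k.2, hk⟩
  obtain ⟨_, hadd⟩ := exists_leftBrace_of_sup_eq_top hL.sup_normalizer_eq_top
    (fun g => hφ.map_add_of_congr_eq (hinv g))
    (le_inf subgroupOf_le_center (subgroupOf_le_center.trans center_le))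
    (subgroupOf_le_socle hG hLN hcore)
  refine ⟨‹_›, fun p hp => (hL.sylowCenterCore_le_sup hp).trans (sup_le ?_ ?_)⟩
  all_goals have : Fact p.Prime := ⟨hp⟩
  · rintro t ⟨ht, htL⟩
    refine map_subtype_socle_le_socle hL.sup_normalizer_eq_top hadd ⟨⟨t, htL⟩, ?_, rfl⟩
    exact center_le (sylowCenterCore.subgroupOf_le_center L ht)
  · rintro t ⟨ht, htQ⟩
    refine map_subtype_socle_inf_centralizer_le_socle hL.sup_normalizer_eq_top hadd
      ⟨⟨⟨t, centralizer_le_normalizer _ htQ⟩, ?_, rfl⟩, ?_⟩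
    · exact hcore p hp (sylowCenterCore.subgroupOf_le _ ht)
    · exact sylowCenterCore.le_centralizer_of_classLETwo L ht

theorem HasAdmissibleSylows.hasCoreBrace_of_isNilpotent {G : Type*} [Group G] [Finite G]
    [Group.IsNilpotent G] (hG : HasAdmissibleSylows G) : HasCoreBrace G := by
  have := hG.classLETwo_of_isNilpotent
  have : ClassLETwo (⊤ : Subgroup G) := (hG.subgroup ⊤).classLETwo_of_isNilpotent
  obtain ⟨φ, hφ⟩ := hG.exists_isHalfCommutator
  refine ⟨hφ.leftBrace, fun p hp => le_trans ?_ hφ.center_le_socle⟩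
  have : Fact p.Prime := ⟨hp⟩
  rw [← centralizer_univ, ← coe_top]
  exact sylowCenterCore.le_centralizer_of_classLETwo ⊤

theorem HasAdmissibleSylows.hasCoreBrace.{u} {G : Type u} [Group G] [Finite G]
    [Group.IsSolvable G] (hG : HasAdmissibleSylows G) : HasCoreBrace G := by
  induction hn : Nat.card G using Nat.strong_induction_on generalizing G with
  | _ n ih =>
    by_cases hnil : Group.IsNilpotent G
    · exact hG.hasCoreBrace_of_isNilpotent
    obtain ⟨q, hq, Q, hQ, L, hL, hLQ⟩ := exists_isFrattiniKernel_of_not_isNilpotent hnil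
    have : Fact q.Prime := ⟨hq⟩
    have hlt : Nat.card (normalizer (Q : Set G)) < n := by
      refine hn ▸ lt_of_le_of_ne (card_le_card_group _) fun h => hQ ?_
      exact normalizer_eq_top_iff.1 (eq_top_of_card_eq _ h)
    exact hL.hasCoreBrace hG hLQ (ih _ hlt (hG.subgroup _) rfl)

theorem HasAdmissibleSylows.of_sylow {G : Type*} [Group G]
    (hSyl : ∀ p : ℕ, p.Prime → ∀ P : Sylow p G, Subgroup.lowerCentralSeries (P : Subgroup G) 2 = ⊥)
    (hcomm : ∀ P : Sylow 2 G, ∀ Q < (P : Subgroup G), IsMulCommutative Q) :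
    HasAdmissibleSylows G where
  classLETwo {p} hp P hP := by
    obtain ⟨S, hPS⟩ := hP.exists_le_sylow
    refine .of_commute fun x y z => ?_
    have : ⁅⁅(x : G), (y : G)⁆, (z : G)⁆ ∈ Subgroup.lowerCentralSeries (S : Subgroup G) 2 :=
      commutator_mem_commutator (commutator_mem_commutator (hPS x.2) (hPS y.2)) (hPS z.2)
    rw [hSyl p hp S, mem_bot, commutatorElement_eq_one_iff_mul_comm] at this
    exact Subtype.ext this
  isMulCommutative_of_lt hP hQP := by
    obtain ⟨S, hPS⟩ := hP.exists_le_sylow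
    exact hcomm S _ (hQP.trans_le hPS)

theorem isMulCommutative_of_lt_of_mulEquiv_quaternionGroup {G : Type*} [Group G]
    {P Q : Subgroup G} (e : P ≃* QuaternionGroup 2) (hQP : Q < P) : IsMulCommutative Q := by
  have generate : ∀ x y z : QuaternionGroup 2, x * y ≠ y * x →
      ∃ i j : Fin 4, z = x ^ (i : ℕ) * y ^ (j : ℕ) := by decide
  refine .of_comm fun x y => ?_
  by_contra hxy
  let f : Q →* QuaternionGroup 2 := e.toMonoidHom.comp (inclusion hQP.le)
  have hf : Injective f := e.injective.comp (inclusion_injective hQP.le)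
  refine hQP.not_ge fun z hz => ?_
  obtain ⟨i, j, hz'⟩ := generate (f x) (f y) (e ⟨z, hz⟩) fun h =>
    hxy (hf (by rw [map_mul, map_mul, h]))
  have : e ⟨z, hz⟩ = e (inclusion hQP.le (x ^ (i : ℕ) * y ^ (j : ℕ))) := by
    rw [hz', ← map_pow, ← map_pow, ← map_mul]
    rfl
  rw [show z = (x ^ (i : ℕ) * y ^ (j : ℕ) : Q) from congrArg Subtype.val (e.injective this)]
  exact SetLike.coe_mem _

theorem isIYB_of_sylow_two_quaternion_general {G : Type*} [Group G] [Finite G]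
    (hsol : Group.IsSolvable G)
    (hSyl : ∀ p : ℕ, p.Prime → ∀ P : Sylow p G, Subgroup.lowerCentralSeries (P : Subgroup G) 2 = ⊥)
    (hcomm : ∀ P : Sylow 2 G, ∀ Q < (P : Subgroup G), IsMulCommutative Q) : IsIYB G := by
  obtain ⟨_, -⟩ := (HasAdmissibleSylows.of_sylow hSyl hcomm).hasCoreBrace
  exact LeftBrace.isIYB G

/-- Theorem B: a finite soluble group whose Sylow subgroups have
nilpotency class at most `2` and whose Sylow `2`-subgroups are isomorphic to `Q₈`
is an IYB-group. -/
theorem isIYB_of_sylow_two_quaternion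
    {G : Type*} [Group G] [Finite G] (hsol : IsSolvable G)
    (hSyl : ∀ p : ℕ, p.Prime → ∀ P : Sylow p G,
      lowerCentralSeries (P : Subgroup G) 2 = ⊥)
    (hQ8 : ∀ P : Sylow 2 G, Nonempty ((P : Subgroup G) ≃* QuaternionGroup 2)) :
    IsIYB G :=
  isIYB_of_sylow_two_quaternion_general hsol hSyl fun P _ hQP =>
    let ⟨e⟩ := hQ8 P
    isMulCommutative_of_lt_of_mulEquiv_quaternionGroup e hQP
end

section
/- Every finite soluble group G all of whose Sylow subgroups have nilpotency class at most 2 is the multiplicative group of a skew left brace of nilpotent type. -/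
/-- A finite group is an `𝒩·YB`-group iff it is the multiplicative group of a skew
left brace of nilpotent type: there is a second, nilpotent group structure `(G, +)`
(transported from a nilpotent group `A` along a bijection `f`) satisfying the skew
brace law `x(y + z) = xy − x + xz`. -/
def IsNilpotentTypeSkewBraceGroup (G : Type u) [Group G] : Prop :=
  ∃ (A : Type u) (_ : Group A) (f : G ≃ A),
    Group.IsNilpotent A ∧
    ∀ x y z : G, x * f.symm (f y * f z) = f.symm (f (x * y) * (f x)⁻¹ * f (x * z))

/-!
If `G` is nilpotent, the trivial skew left brace works. Otherwise, by solubility and a Frattini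
argument, there are primes `p ≠ q` and a `q`-subgroup `Q` not centralizing `U = O_p(G)` with
`G = F N_G(Q)`, where `F` is the Fitting subgroup. Put `R = O_{p'}(G) Q`, `N = ⁅U, R⁆` and
`H = N_G(R) < G`. Then `N` is normal, coprime action gives `G = NH` and `N ⊓ H ≤ ⁅U, U⁆`, and the
class bound makes `⁅U, U⁆` centralize every `p`-subgroup of `G`. By induction `H` carries a skew
left brace, with additive group `A` say. In its semidirect product with the trivial skew left brace
on `N`, the kernel of `N ⋊ H → G` lies in the socle, so the quotient is a skew left brace on `G`
with additive group a quotient of `N × A`. The induction goes through because one also maintains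
that, for every prime `l`, the elements of `O_l(G)` which centralize all `l`-subgroups lie in the
socle.
-/

/-- A skew left brace with multiplicative group `G` and additive group `A`, the latter written
multiplicatively; the two underlying sets are identified by a bijection. The brace law
`x(y + z) = xy - x + xz` is stated for an element `w = y + z`, to avoid the inverse bijection. -/
structure SkewLeftBrace (G A : Type*) [Group G] [Group A] extends G ≃ A where
  brace_law : ∀ x {y z w : G}, toEquiv w = toEquiv y * toEquiv z →
    toEquiv (x * w) = toEquiv (x * y) * (toEquiv x)⁻¹ * toEquiv (x * z)

namespace SkewLeftBrace

instance {G A : Type*} [Group G] [Group A] : CoeFun (SkewLeftBrace G A) fun _ => G → A :=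
  ⟨fun B => B.toEquiv⟩

theorem isNilpotentTypeSkewBraceGroup {G A : Type u} [Group G] [Group A] [Group.IsNilpotent A]
    (B : SkewLeftBrace G A) : IsNilpotentTypeSkewBraceGroup G :=
  ⟨A, inferInstance, B.toEquiv, inferInstance, fun x y z =>
    B.toEquiv.injective <| by
      rw [Equiv.apply_symm_apply, B.brace_law x (B.toEquiv.apply_symm_apply _)]⟩

/-- The skew left brace on a group whose two operations coincide. -/
def trivial (G : Type*) [Group G] : SkewLeftBrace G G where
  toEquiv := Equiv.refl G
  brace_law x y z w h := by
    simp only [Equiv.refl_apply] at h ⊢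
    rw [h]
    group

section Socle

variable {G A : Type*} [Group G] [Group A] (B : SkewLeftBrace G A)

theorem map_one : B 1 = 1 := by
  simpa using B.brace_law 1 (B.toEquiv.apply_symm_apply (B 1 * B 1))

/-- The socle of a skew left brace: the elements `t` with `tg = t + g = g + t` for all `g`. -/
def socle : Subgroup G where
  carrier := {t | ∀ g, B (t * g) = B t * B g ∧ B (t * g) = B g * B t}
  one_mem' g := by simp [B.map_one]
  mul_mem' {s t} hs ht g := by
    rw [mul_assoc, (hs t).1]
    refine ⟨by rw [(hs (t * g)).1, (ht g).1, mul_assoc], ?_⟩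
    rw [(hs (t * g)).2, (ht g).2, mul_assoc, ← (hs t).2, (hs t).1]
  inv_mem' {t} ht g := by
    have map_inv_mul (x : G) : B (t⁻¹ * x) = (B t)⁻¹ * B x := by
      rw [eq_inv_mul_iff_mul_eq, ← (ht _).1, mul_inv_cancel_left]
    have map_inv : B t⁻¹ = (B t)⁻¹ := by simpa [B.map_one] using map_inv_mul 1
    refine ⟨by rw [map_inv_mul, map_inv], ?_⟩
    rw [map_inv, eq_mul_inv_iff_mul_eq, ← (ht _).2, mul_inv_cancel_left]

theorem center_le_socle_trivial : Subgroup.center G ≤ (trivial G).socle :=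
  fun _ ht g => ⟨rfl, (Subgroup.mem_center_iff.1 ht g).symm⟩

/-- The subgroup of the additive group carried by `K ⊓ B.socle`, on which the two operations of
`B` agree. -/
def socleMap (K : Subgroup G) : Subgroup A :=
  (K.subgroupOf B.socle).map (MonoidHom.mk' (fun t : B.socle => B t) fun s t => (s.2 t).1)

theorem mem_socleMap {K : Subgroup G} {a : A} :
    a ∈ B.socleMap K ↔ ∃ k ∈ K, k ∈ B.socle ∧ B k = a := by
  constructor
  · rintro ⟨k, hk, rfl⟩
    exact ⟨k, hk, k.2, rfl⟩
  · rintro ⟨k, hk, hks, rfl⟩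
    exact ⟨⟨k, hks⟩, hk, rfl⟩

instance normal_socleMap (K : Subgroup G) : (B.socleMap K).Normal := by
  refine ⟨fun a ha b => ?_⟩
  obtain ⟨k, -, hk, rfl⟩ := B.mem_socleMap.1 ha
  obtain ⟨g, rfl⟩ := B.toEquiv.surjective b
  rwa [← (hk g).2, (hk g).1, mul_inv_cancel_right]

end Socle

section Quotient

variable {G G' A : Type*} [Group G] [Group G'] [Group A] (B : SkewLeftBrace G A) {f : G →* G'}
  (hf : Function.Surjective f) (hker : f.ker ≤ B.socle)

include hker in
theorem mk_eq_mk_iff {x y : G} : (B x : A ⧸ B.socleMap f.ker) = B y ↔ f x = f y := by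
  have hxy : f x = f y ↔ y * x⁻¹ ∈ f.ker := by
    rw [MonoidHom.mem_ker, _root_.map_mul, map_inv, mul_inv_eq_one, eq_comm]
  rw [QuotientGroup.eq, B.mem_socleMap, hxy]
  constructor
  · rintro ⟨k, hk, hks, h⟩
    have hkx : k * x = y := B.toEquiv.injective <| by rw [(hks x).2, h, mul_inv_cancel_left]
    rwa [← hkx, mul_inv_cancel_right]
  · intro h
    refine ⟨_, h, hker h, ?_⟩
    rw [eq_inv_mul_iff_mul_eq, ← (hker h x).2, inv_mul_cancel_right]

/-- The bijection underlying `SkewLeftBrace.quotient`. -/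
noncomputable def quotientEquiv : G' ≃ A ⧸ B.socleMap f.ker :=
  Equiv.ofBijective (fun g => (B (Function.surjInv hf g) : A ⧸ B.socleMap f.ker))
    ⟨fun x y h => by simpa [Function.surjInv_eq hf] using (B.mk_eq_mk_iff hker).1 h,
     fun b => by
        obtain ⟨a, rfl⟩ := QuotientGroup.mk_surjective b
        obtain ⟨x, rfl⟩ := B.toEquiv.surjective a
        exact ⟨f x, (B.mk_eq_mk_iff hker).2 (Function.surjInv_eq hf _)⟩⟩

theorem quotientEquiv_apply (x : G) : B.quotientEquiv hf hker (f x) = B x :=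
  (B.mk_eq_mk_iff hker).2 (Function.surjInv_eq hf _)

/-- The quotient of a skew left brace by a normal subgroup of its socle. -/
noncomputable def quotient : SkewLeftBrace G' (A ⧸ B.socleMap f.ker) where
  toEquiv := B.quotientEquiv hf hker
  brace_law x' y' z' w' h := by
    obtain ⟨x, rfl⟩ := hf x'
    obtain ⟨y, rfl⟩ := hf y'
    obtain ⟨z, rfl⟩ := hf z'
    obtain ⟨w, hw⟩ := B.toEquiv.surjective (B y * B z)
    obtain rfl : f w = w' := (B.quotientEquiv hf hker).injective <| by
      simp only [h, quotientEquiv_apply, hw, QuotientGroup.mk_mul]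
    simp only [← _root_.map_mul, quotientEquiv_apply, B.brace_law x hw, QuotientGroup.mk_mul,
      QuotientGroup.mk_inv]

theorem map_socle_le_socle_quotient : B.socle.map f ≤ (B.quotient hf hker).socle := by
  rintro _ ⟨t, ht, rfl⟩ g'
  obtain ⟨g, rfl⟩ := hf g'
  change B.quotientEquiv hf hker _ = _ * _ ∧ B.quotientEquiv hf hker _ = _ * _
  rw [← _root_.map_mul]
  simp only [quotient, quotientEquiv_apply, ← QuotientGroup.mk_mul]
  exact ⟨congrArg _ (ht g).1, congrArg _ (ht g).2⟩

end Quotient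

section Semidirect

variable {N H A : Type*} [Group N] [Group H] [Group A] (φ : H →* MulAut N) (B : SkewLeftBrace H A)

/-- The semidirect product of the trivial skew left brace on `N` and a skew left brace `B` on
`H`, with the direct product as additive group. -/
def semidirect : SkewLeftBrace (N ⋊[φ] H) (N × A) where
  toEquiv := SemidirectProduct.equivProd.trans ((Equiv.refl N).prodCongr B.toEquiv)
  brace_law x y z w h := by
    obtain ⟨hl, hr⟩ := Prod.ext_iff.1 h
    refine Prod.ext ?_ (B.brace_law x.right hr)
    change w.left = y.left * z.left at hl
    change x.left * φ x.right w.left =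
      x.left * φ x.right y.left * x.left⁻¹ * (x.left * φ x.right z.left)
    rw [hl, _root_.map_mul]
    group

theorem mem_socle_semidirect {x : N ⋊[φ] H} (hleft : x.left ∈ Subgroup.center N)
    (hφ : φ x.right = 1) (hright : x.right ∈ B.socle) : x ∈ (B.semidirect φ).socle := by
  intro g
  have hg : (x * g).left = x.left * g.left := by
    rw [SemidirectProduct.mul_left, hφ, MulAut.one_apply]
  exact ⟨Prod.ext hg (hright g.right).1,
    Prod.ext (hg.trans (Subgroup.mem_center_iff.1 hleft g.left).symm) (hright g.right).2⟩

end Semidirect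

section Glue

variable {G A : Type*} [Group G] [Group A] {N H : Subgroup G} [N.Normal] (hNH : N ⊔ H = ⊤)
  (hcen : N ⊓ H ≤ Subgroup.centralizer N) (B : SkewLeftBrace H A)
  (hsoc : N.subgroupOf H ≤ B.socle)

/-- The multiplication map `N ⋊ H → G`, for a normal subgroup `N` and a subgroup `H` of `G`. -/
def mulHom (N H : Subgroup G) [N.Normal] : N ⋊[MulAut.conjNormal.comp H.subtype] H →* G :=
  SemidirectProduct.lift N.subtype H.subtype fun h => by ext; simp

include hNH in
theorem mulHom_surjective : Function.Surjective (mulHom N H) := fun g => by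
  obtain ⟨n, hn, h, hh, rfl⟩ := Subgroup.mem_sup_of_normal_left.1 (hNH ▸ Subgroup.mem_top g)
  exact ⟨⟨⟨n, hn⟩, ⟨h, hh⟩⟩, rfl⟩

theorem mem_socle_semidirect_conjNormal {x : N ⋊[MulAut.conjNormal.comp H.subtype] H}
    (hleft : (x.left : G) ∈ Subgroup.centralizer (N : Set G))
    (hright : (x.right : G) ∈ Subgroup.centralizer (N : Set G)) (hs : x.right ∈ B.socle) :
    x ∈ (B.semidirect (MulAut.conjNormal.comp H.subtype)).socle := by
  refine B.mem_socle_semidirect _ ?_ ?_ hs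
  · exact Subgroup.mem_center_iff.2 fun n => Subtype.ext (hleft n n.2)
  · ext n
    simp [(hright n n.2).symm]

include hcen hsoc in
theorem ker_mulHom_le_socle :
    (mulHom N H).ker ≤ (B.semidirect (MulAut.conjNormal.comp H.subtype)).socle := by
  rintro ⟨n, h⟩ hx
  have hnh : (n : G) = (h : G)⁻¹ := eq_inv_of_mul_eq_one_left hx
  have hhN : (h : G) ∈ N := by simpa [hnh] using n.2
  have hh : (h : G) ∈ Subgroup.centralizer (N : Set G) := hcen ⟨hhN, h.2⟩
  refine B.mem_socle_semidirect_conjNormal ?_ hh (hsoc hhN)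
  simpa [hnh] using hh

/-- The skew left brace on `G = NH` which extends `B` and is trivial on the normal subgroup `N`. -/
noncomputable def glue : SkewLeftBrace G
    ((N × A) ⧸ (B.semidirect (MulAut.conjNormal.comp H.subtype)).socleMap (mulHom N H).ker) :=
  (B.semidirect _).quotient (mulHom_surjective hNH) (B.ker_mulHom_le_socle hcen hsoc)

theorem mul_mem_socle_glue {n : N} {h : H} (hn : (n : G) ∈ Subgroup.centralizer (N : Set G))
    (hh : (h : G) ∈ Subgroup.centralizer (N : Set G)) (hs : h ∈ B.socle) :
    (n * h : G) ∈ (B.glue hNH hcen hsoc).socle :=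
  map_socle_le_socle_quotient _ _ _
    ⟨⟨n, h⟩, B.mem_socle_semidirect_conjNormal hn hh hs, rfl⟩

end Glue

end SkewLeftBrace

section CoprimeAction

variable {G : Type*} [Group G]

theorem exists_mul_mem_centralizer {q : ℕ} [Fact q.Prime] {K Q : Subgroup G}
    (hQ : IsPGroup q Q) (hK : ¬ q ∣ Nat.card K)
    (hQK : Q ≤ Subgroup.normalizer (K : Set G)) {x : G} (hx : ∀ y ∈ Q, x⁻¹ * (y * x * y⁻¹) ∈ K) :
    ∃ k ∈ K, x * k ∈ Subgroup.centralizer (Q : Set G) := by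
  -- `Q` acts by conjugation on the coset `xK`, whose size is prime to `q`.
  let conjCoset : MulAction Q {g : G // x⁻¹ * g ∈ K} :=
    { smul y g := ⟨y * g * (y : G)⁻¹, by
        simpa [mul_assoc] using
          K.mul_mem (hx y y.2) ((Subgroup.mem_normalizer_iff.1 (hQK y.2) _).1 g.2)⟩
      one_smul g := Subtype.ext (show (1 : G) * g * (1 : G)⁻¹ = g by simp)
      mul_smul y z g := Subtype.ext
        (show (y * z : G) * g * (y * z : G)⁻¹ = y * (z * g * (z : G)⁻¹) * (y : G)⁻¹ by group) }
  have hcard : Nat.card {g : G // x⁻¹ * g ∈ K} = Nat.card K :=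
    Nat.card_congr ((Equiv.mulLeft x⁻¹).subtypeEquiv fun _ => Iff.rfl)
  obtain ⟨⟨g, hg⟩, hfix⟩ := hQ.nonempty_fixed_point_of_prime_not_dvd_card _ (hcard ▸ hK)
  refine ⟨x⁻¹ * g, hg, fun y hy => ?_⟩
  rw [mul_inv_cancel_left, ← mul_inv_eq_iff_eq_mul]
  exact congrArg Subtype.val (hfix ⟨y, hy⟩)

theorem le_commutator_sup_centralizer {q : ℕ} [Fact q.Prime] {V Q : Subgroup G}
    (hQ : IsPGroup q Q) (hV : ¬ q ∣ Nat.card V) (hQV : Q ≤ Subgroup.normalizer (V : Set G)) :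
    V ≤ ⁅V, Q⁆ ⊔ V ⊓ Subgroup.centralizer (Q : Set G) := by
  intro x hx
  have hle : ⁅V, Q⁆ ≤ V := Subgroup.le_normalizer_iff_commutator_le_left.1 hQV
  obtain ⟨k, hk, hxk⟩ := exists_mul_mem_centralizer hQ
    (fun h => hV (h.trans (Subgroup.card_dvd_of_le hle)))
    (Subgroup.normalizer_commutator_ge_right V Q) (x := x) fun y hy => by
      simpa [commutatorElement_def, mul_assoc] using
        Subgroup.commutator_mem_commutator (V.inv_mem hx) hy
  rw [← mul_inv_cancel_right x k]
  exact mul_mem (Subgroup.mem_sup_right ⟨V.mul_mem hx (hle hk), hxk⟩)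
    (Subgroup.mem_sup_left (inv_mem hk))

end CoprimeAction

section Transfer

variable {G : Type*} [Group G] (U R : Subgroup G) [U.Normal]

/-- The norm map `u ↦ ∏ r ∈ R, u ^ r` from `U` to its abelianization, for a finite subgroup `R`. -/
noncomputable def conjNorm : U →* Abelianization U :=
  ∏ᶠ r : R, Abelianization.of.comp (MulAut.conjNormal (r : G) : MulAut U).toMonoidHom

variable [Finite R]

theorem conjNorm_apply (u : U) :
    conjNorm U R u = ∏ᶠ r : R, Abelianization.of (MulAut.conjNormal (r : G) u) := by
  have := Fintype.ofFinite R
  simp [conjNorm, finprod_eq_prod_of_fintype, MonoidHom.finsetProd_apply]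

theorem commutator_le_map_ker_conjNorm : ⁅U, R⁆ ≤ (conjNorm U R).ker.map U.subtype := by
  rw [Subgroup.commutator_le]
  intro u hu r hr
  refine ⟨⟨u, hu⟩ * (MulAut.conjNormal r ⟨u, hu⟩)⁻¹, ?_, by simp [commutatorElement_def, mul_assoc]⟩
  have hinv : conjNorm U R (MulAut.conjNormal r ⟨u, hu⟩) = conjNorm U R ⟨u, hu⟩ := by
    rw [conjNorm_apply, conjNorm_apply]
    refine finprod_eq_of_bijective _ (Group.mulRight_bijective ⟨r, hr⟩) fun s => ?_
    simp
  simp [MonoidHom.mem_ker, hinv]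

theorem conjNorm_apply_of_mem_centralizer {u : U}
    (hu : (u : G) ∈ Subgroup.centralizer (R : Set G)) :
    conjNorm U R u = Abelianization.of u ^ Nat.card R := by
  have := Fintype.ofFinite R
  have hfix (r : R) : MulAut.conjNormal (r : G) u = u := Subtype.ext <| by
    simp [hu r r.2]
  simp [conjNorm_apply, hfix, finprod_eq_prod_of_fintype]

-- The norm vanishes on `⁅U, R⁆` and is the power map with exponent `|R|` on the centralizer of `R`.
theorem commutator_inf_centralizer_le (h : (Nat.card U).Coprime (Nat.card R)) :
    ⁅U, R⁆ ⊓ Subgroup.centralizer (R : Set G) ≤ ⁅U, U⁆ := by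
  rintro _ ⟨hx, hxR⟩
  obtain ⟨u, hu, rfl⟩ := commutator_le_map_ker_conjNorm U R hx
  have hpow : Abelianization.of u ^ Nat.card R = 1 :=
    (conjNorm_apply_of_mem_centralizer U R hxR).symm.trans hu
  have hu1 : Abelianization.of u = 1 := orderOf_eq_one_iff.1 <|
    Nat.eq_one_of_dvd_coprimes h ((orderOf_map_dvd _ u).trans (orderOf_dvd_natCard u))
      (orderOf_dvd_of_pow_eq_one hpow)
  rw [← Subgroup.map_subtype_commutator, ← Abelianization.ker_of]
  exact Subgroup.mem_map_of_mem _ hu1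

end Transfer

section Normalizer

variable {G : Type*} [Group G] {U R : Subgroup G} [U.Normal]

theorem normal_commutator_of_sup_normalizer_eq_top
    (h : U ⊔ Subgroup.normalizer (R : Set G) = ⊤) : ⁅U, R⁆.Normal := by
  rw [← Subgroup.normalizer_eq_top_iff, eq_top_iff, ← h]
  refine sup_le (Subgroup.normalizer_commutator_ge_left U R) fun g hg => ?_
  rw [Subgroup.mem_normalizer_iff_map_conj_eq] at hg ⊢
  rw [Subgroup.map_commutator, hg, Subgroup.Normal.map_conj_eq]

theorem inf_normalizer_le_centralizer_of_disjoint (h : Disjoint U R) :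
    U ⊓ Subgroup.normalizer (R : Set G) ≤ Subgroup.centralizer (R : Set G) := by
  rw [← Subgroup.commutator_eq_bot_iff_le_centralizer, ← le_bot_iff, ← h.eq_bot]
  exact le_inf
    ((Subgroup.commutator_mono inf_le_left le_rfl).trans (Subgroup.commutator_le_left U R))
    (Subgroup.le_normalizer_iff_commutator_le_right.1 inf_le_right)

end Normalizer

section Cores

variable (p : ℕ) (G : Type*) [Group G]

/-- The `p`-core `O_p(G)`, the largest normal `p`-subgroup of `G`. -/
def pCore : Subgroup G := sSup {U | U.Normal ∧ IsPGroup p U}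

/-- The `p'`-core `O_{p'}(G)`, the largest normal subgroup of order prime to `p` of a finite
group `G`. -/
def pPrimeCore : Subgroup G := sSup {U | U.Normal ∧ (Nat.card U).Coprime p}

/-- The Fitting subgroup of a finite group `G`, as the join of the `p`-cores of `G`. -/
def fitting : Subgroup G := ⨆ p : Nat.Primes, pCore p G

instance normal_pCore : (pCore p G).Normal := Subgroup.sSup_normal _ fun _ h => h.1

instance normal_pPrimeCore : (pPrimeCore p G).Normal := Subgroup.sSup_normal _ fun _ h => h.1

instance normal_fitting : (fitting G).Normal := Subgroup.iSup_normal _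

theorem isPGroup_pCore : IsPGroup p (pCore p G) :=
  Sylow.sSup_of_normal _ (fun _ h => h.2) fun _ h => h.1

variable {p G}

theorem le_pCore {U : Subgroup G} [hn : U.Normal] (hU : IsPGroup p U) : U ≤ pCore p G :=
  le_sSup ⟨hn, hU⟩

theorem le_pPrimeCore {U : Subgroup G} [hn : U.Normal] (hU : (Nat.card U).Coprime p) :
    U ≤ pPrimeCore p G :=
  le_sSup ⟨hn, hU⟩

theorem pCore_le_fitting [hp : Fact p.Prime] : pCore p G ≤ fitting G :=
  le_iSup (fun l : Nat.Primes => pCore l G) ⟨p, hp.out⟩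

theorem card_sup_dvd (A B : Subgroup G) [A.Normal] :
    Nat.card (A ⊔ B : Subgroup G) ∣ Nat.card A * Nat.card B := by
  have h := Subgroup.relIndex_mul_relIndex ⊥ A (A ⊔ B) bot_le le_sup_left
  rw [Subgroup.relIndex_bot_left, Subgroup.relIndex_bot_left, Subgroup.relIndex_sup_left] at h
  exact h ▸ Nat.mul_dvd_mul_left _ (Subgroup.relIndex_dvd_card _ _)

theorem coprime_card_sup {n : ℕ} {A B : Subgroup G} [A.Normal] (hA : (Nat.card A).Coprime n)
    (hB : (Nat.card B).Coprime n) : (Nat.card (A ⊔ B : Subgroup G)).Coprime n :=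
  (hA.mul_left hB).of_dvd_left (card_sup_dvd A B)

theorem coprime_card_of_isPGroup [Fact p.Prime] {U : Subgroup G} [Finite U] (hU : IsPGroup p U)
    {n : ℕ} (hn : n.Coprime p) : (Nat.card U).Coprime n := by
  obtain ⟨k, hk⟩ := IsPGroup.iff_card.1 hU
  exact hk ▸ hn.symm.pow_left k

variable [Finite G]

theorem coprime_card_pPrimeCore : (Nat.card (pPrimeCore p G)).Coprime p := by
  let S : Set (Subgroup G) := {U | U.Normal ∧ (Nat.card U).Coprime p}
  have hS : SupClosed S := fun A ⟨hA, hAp⟩ B ⟨hB, hBp⟩ =>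
    ⟨Subgroup.sup_normal A B, coprime_card_sup hAp hBp⟩
  exact (hS.sSup_mem S.toFinite ⟨inferInstance, by simp⟩ subset_rfl).2

variable [Fact p.Prime]

theorem disjoint_pCore_of_coprime {V : Subgroup G} (hV : (Nat.card V).Coprime p) :
    Disjoint (pCore p G) V :=
  Subgroup.disjoint_of_coprime_natCard (coprime_card_of_isPGroup (isPGroup_pCore p G) hV)

theorem pPrimeCore_le_centralizer_pCore :
    pPrimeCore p G ≤ Subgroup.centralizer (pCore p G : Set G) :=
  Subgroup.commutator_eq_bot_iff_le_centralizer.1 <|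
    Subgroup.commutator_eq_bot_of_disjoint (disjoint_pCore_of_coprime coprime_card_pPrimeCore).symm

theorem pCore_le_pPrimeCore {l : ℕ} [Fact l.Prime] (h : l ≠ p) : pCore l G ≤ pPrimeCore p G :=
  le_pPrimeCore <| coprime_card_of_isPGroup (isPGroup_pCore l G) <|
    (Nat.coprime_primes Fact.out Fact.out).2 h.symm

variable (p) in
theorem fitting_le : fitting G ≤ pCore p G ⊔ pPrimeCore p G := by
  refine iSup_le fun l => ?_
  have : Fact (l : ℕ).Prime := ⟨l.2⟩
  obtain rfl | hl := eq_or_ne (l : ℕ) p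
  · exact le_sup_left
  · exact (pCore_le_pPrimeCore hl).trans le_sup_right

theorem not_dvd_index_pCore (h : fitting G = ⊤) : ¬ p ∣ (pCore p G).index := by
  have htop : pCore p G ⊔ pPrimeCore p G = ⊤ := top_le_iff.1 (h ▸ fitting_le p)
  have hdvd : (pCore p G).index ∣ Nat.card (pPrimeCore p G) := by
    rw [← Subgroup.relIndex_top_right, ← htop, Subgroup.relIndex_sup_left]
    exact Subgroup.relIndex_dvd_card _ _
  exact fun hp => (Nat.Prime.coprime_iff_not_dvd Fact.out).1 coprime_card_pPrimeCore.symm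
    (hp.trans hdvd)

omit [Fact p.Prime] in
theorem isNilpotent_of_fitting_eq_top (h : fitting G = ⊤) : Group.IsNilpotent G := by
  refine (Group.isNilpotent_of_finite_tfae.out 0 3 rfl rfl).2 fun p _ P => ?_
  have hle : pCore p G ≤ P := (isPGroup_pCore p G).le_sylow_of_normal P
  have heq := ((isPGroup_pCore p G).toSylow (not_dvd_index_pCore h)).is_maximal' P.isPGroup' hle
  exact heq ▸ normal_pCore p G

end Cores

section SylowCenter

variable (p : ℕ) (G : Type*) [Group G]

/-- The elements of the `p`-core of `G` which centralize every Sylow `p`-subgroup of `G`, hence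
every `p`-subgroup. -/
def sylowCenter : Subgroup G :=
  pCore p G ⊓ ⨅ P : Sylow p G, Subgroup.centralizer (P : Set G)

theorem sylowCenter_le_pCore : sylowCenter p G ≤ pCore p G := inf_le_left

variable {p G}

theorem mem_sylowCenter {x : G} :
    x ∈ sylowCenter p G ↔
      x ∈ pCore p G ∧ ∀ P : Sylow p G, x ∈ Subgroup.centralizer (P : Set G) := by
  simp [sylowCenter, Subgroup.mem_inf, Subgroup.mem_iInf]

theorem sylowCenter_le_centralizer {P : Subgroup G} (hP : IsPGroup p P) :
    sylowCenter p G ≤ Subgroup.centralizer (P : Set G) := by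
  obtain ⟨S, hS⟩ := hP.exists_le_sylow
  exact inf_le_right.trans ((iInf_le _ S).trans (Subgroup.centralizer_le hS))

instance normal_sylowCenter : (sylowCenter p G).Normal := by
  refine ⟨fun x hx g => mem_sylowCenter.2 ⟨(normal_pCore p G).conj_mem x hx.1 g, fun P y hy => ?_⟩⟩
  have hcomm := sylowCenter_le_centralizer (P.isPGroup'.map (MulAut.conj g⁻¹).toMonoidHom) hx _
    ⟨y, hy, rfl⟩
  simpa [mul_assoc] using congrArg (MulAut.conj g) hcomm

theorem subgroupOf_sylowCenter_le (H : Subgroup G) :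
    (sylowCenter p G).subgroupOf H ≤ sylowCenter p H := by
  refine le_inf ?_ (le_iInf fun P x hx y hy => Subtype.ext ?_)
  · exact (Subgroup.comap_mono (sylowCenter_le_pCore p G)).trans
      (le_pCore (isPGroup_pCore p G).comap_subtype)
  · exact sylowCenter_le_centralizer (P.isPGroup'.map H.subtype) hx y ⟨y, hy, rfl⟩

theorem sylowCenter_le_center [Finite G] [Fact p.Prime] (h : fitting G = ⊤) :
    sylowCenter p G ≤ Subgroup.center G := by
  rw [← Subgroup.centralizer_univ, ← Subgroup.coe_top, Subgroup.le_centralizer_iff, ← h]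
  refine (fitting_le p).trans (sup_le ?_ ?_)
  · exact Subgroup.le_centralizer_iff.1 (sylowCenter_le_centralizer (isPGroup_pCore p G))
  · exact pPrimeCore_le_centralizer_pCore.trans
      (Subgroup.centralizer_le (sylowCenter_le_pCore p G))

variable (p G) in
/-- All Sylow `p`-subgroups of `G` have nilpotency class at most `n`. -/
def SylowClassLE (n : ℕ) : Prop := ∀ P : Sylow p G, (P : Subgroup G).lowerCentralSeries n = ⊥

theorem SylowClassLE.subgroup {n : ℕ} (h : SylowClassLE p G n) (H : Subgroup G) :
    SylowClassLE p H n := fun P => by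
  obtain ⟨S, hS⟩ := (P.isPGroup'.map H.subtype).exists_le_sylow
  rw [← (Subgroup.map_injective H.subtype_injective).eq_iff, Subgroup.map_lowerCentralSeries,
    Subgroup.map_bot, ← le_bot_iff, ← h S]
  exact Subgroup.lowerCentralSeries_mono n hS

theorem commutator_le_sylowCenter (h : SylowClassLE p G 2) {U : Subgroup G} [U.Normal]
    (hU : IsPGroup p U) : ⁅U, U⁆ ≤ sylowCenter p G := by
  refine le_inf ((Subgroup.commutator_le_left U U).trans (le_pCore hU)) (le_iInf fun P => ?_)
  have hUP : U ≤ P := hU.le_sylow_of_normal P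
  rw [← Sylow.coe_coe, ← Subgroup.commutator_eq_bot_iff_le_centralizer, ← le_bot_iff, ← h P]
  exact Subgroup.commutator_mono (Subgroup.commutator_mono hUP hUP) le_rfl

end SylowCenter

section Splitting

variable {G : Type*} [Group G] [Finite G]

theorem exists_pCore_ne_bot [Nontrivial G] [Group.IsSolvable G] :
    ∃ q : ℕ, q.Prime ∧ pCore q G ≠ ⊥ := by
  obtain ⟨A, ⟨hAn, hA⟩, hmin⟩ := Set.Finite.exists_minimal
    (Set.toFinite {A : Subgroup G | A.Normal ∧ A ≠ ⊥}) ⟨⊤, inferInstance, top_ne_bot⟩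
  have hcomm : ⁅A, A⁆ = ⊥ := by
    by_contra h
    have hlt := Group.IsSolvable.commutator_lt_of_ne_bot hA
    exact hlt.not_ge (hmin ⟨Subgroup.commutator_normal A A, h⟩ hlt.le)
  have : IsMulCommutative A := Subgroup.le_centralizer_iff_isMulCommutative.1
    (Subgroup.commutator_eq_bot_iff_le_centralizer.1 hcomm)
  obtain ⟨q, hq, hqA⟩ := Nat.exists_prime_and_dvd (mt A.card_eq_one.1 hA)
  have := Fact.mk hq
  let P : Sylow q A := default
  have := P.characteristic_of_normal (Subgroup.normal_of_isMulCommutative _)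
  have hPn : ((P : Subgroup A).map A.subtype).Normal :=
    ConjAct.normal_of_characteristic_of_normal
  refine ⟨q, hq, ne_bot_of_le_ne_bot ?_ (le_pCore (P.isPGroup'.map A.subtype))⟩
  rw [Ne, Subgroup.map_eq_bot_iff_of_injective _ A.subtype_injective]
  exact P.ne_bot_of_dvd_card hqA

theorem le_sup_map_sylow {q n : ℕ} [Fact q.Prime] {K M : Subgroup G}
    (hK : K.relIndex M = q ^ n) (S : Sylow q M) :
    M ≤ K ⊔ (S : Subgroup M).map M.subtype := by
  have hS : ((S : Subgroup M).map M.subtype).relIndex M = (S : Subgroup M).index := by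
    rw [Subgroup.relIndex, Subgroup.subgroupOf,
      Subgroup.comap_map_eq_self_of_injective M.subtype_injective]
  have hcop : (q ^ n).Coprime (S : Subgroup M).index :=
    ((Nat.Prime.coprime_iff_not_dvd Fact.out).2 S.not_dvd_index).pow_left n
  exact Subgroup.relIndex_eq_one.1 <| Nat.eq_one_of_dvd_coprimes hcop
    (hK ▸ Subgroup.relIndex_dvd_of_le_left M le_sup_left)
    (hS ▸ Subgroup.relIndex_dvd_of_le_left M le_sup_right)

omit [Finite G] in
theorem ker_relIndex_comap {G' : Type*} [Group G'] {f : G →* G'} (hf : Function.Surjective f)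
    (L : Subgroup G') : f.ker.relIndex (L.comap f) = Nat.card L := by
  rw [← MonoidHom.comap_bot, Subgroup.relIndex_comap,
    Subgroup.map_comap_eq_self_of_surjective hf, Subgroup.relIndex_bot_left]

theorem exists_sup_normalizer_eq_top [Group.IsSolvable G] {K : Subgroup G} [K.Normal]
    (hK : K ≠ ⊤) : ∃ q : ℕ, q.Prime ∧ ∃ Q : Subgroup G, IsPGroup q Q ∧ ¬ Q ≤ K ∧
      (pCore q G ≤ K → pCore q G ≤ Q) ∧ K ⊔ Subgroup.normalizer (Q : Set G) = ⊤ := by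
  have : Nontrivial (G ⧸ K) := QuotientGroup.nontrivial_iff.2 hK
  obtain ⟨q, hq, hne⟩ := exists_pCore_ne_bot (G := G ⧸ K)
  have := Fact.mk hq
  let M : Subgroup G := (pCore q (G ⧸ K)).comap (QuotientGroup.mk' K)
  have hKM : K ≤ M := QuotientGroup.le_comap_mk' K _
  have hrelIndex : K.relIndex M = Nat.card (pCore q (G ⧸ K)) := by
    simpa only [QuotientGroup.ker_mk'] using
      ker_relIndex_comap (QuotientGroup.mk'_surjective K) (pCore q (G ⧸ K))
  have hMK : ¬ M ≤ K := by
    rwa [← Subgroup.relIndex_eq_one, hrelIndex, Subgroup.card_eq_one]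
  obtain ⟨n, hn⟩ := IsPGroup.iff_card.1 (isPGroup_pCore q (G ⧸ K))
  let S : Sylow q M := default
  have hM : M ≤ K ⊔ (S : Subgroup M).map M.subtype := le_sup_map_sylow (hrelIndex.trans hn) S
  refine ⟨q, hq, _, S.isPGroup'.map M.subtype, fun h => hMK (hM.trans (sup_le le_rfl h)),
    fun h => ?_, ?_⟩
  · have hS := (isPGroup_pCore q G).comap_subtype.le_sylow_of_normal S
    simpa [Subgroup.subgroupOf_map_subtype, h.trans hKM] using
      Subgroup.map_mono (f := M.subtype) hS
  · rw [← top_le_iff, ← Sylow.normalizer_sup_eq_top S]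
    exact sup_le le_sup_right (hM.trans (sup_le_sup_left Subgroup.le_normalizer K))

variable {p q : ℕ} [Fact p.Prime] [Fact q.Prime] {Q : Subgroup G}

omit [Finite G] [Fact p.Prime] in
theorem exists_pCore_not_le_centralizer (hQ : IsPGroup q Q) (hQF : ¬ Q ≤ fitting G)
    (hqQ : pCore q G ≤ Q) (htop : fitting G ⊔ Subgroup.normalizer (Q : Set G) = ⊤) :
    ∃ p : ℕ, p.Prime ∧ p ≠ q ∧ ¬ pCore p G ≤ Subgroup.centralizer (Q : Set G) := by
  by_contra! hcen
  have hle : fitting G ≤ Subgroup.normalizer (Q : Set G) := iSup_le fun l => by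
    obtain hl | hl := eq_or_ne (l : ℕ) q
    · exact hl ▸ hqQ.trans Subgroup.le_normalizer
    · exact (hcen l l.2 hl).trans (Subgroup.centralizer_le_normalizer _)
  have : Q.Normal := by rw [← Subgroup.normalizer_eq_top_iff, ← htop, sup_eq_right.2 hle]
  exact hQF ((le_pCore hQ).trans pCore_le_fitting)

theorem coprime_card_pPrimeCore_sup (hpq : p ≠ q) (hQ : IsPGroup q Q) :
    (Nat.card (pPrimeCore p G ⊔ Q : Subgroup G)).Coprime p :=
  coprime_card_sup coprime_card_pPrimeCore <|
    coprime_card_of_isPGroup hQ ((Nat.coprime_primes Fact.out Fact.out).2 hpq)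

theorem pCore_sup_normalizer_eq_top (htop : fitting G ⊔ Subgroup.normalizer (Q : Set G) = ⊤) :
    pCore p G ⊔ Subgroup.normalizer (pPrimeCore p G ⊔ Q : Subgroup G) = ⊤ := by
  rw [← top_le_iff, ← htop]
  refine sup_le ((fitting_le p).trans (sup_le_sup_left ?_ _)) (le_sup_of_le_right ?_)
  · exact le_sup_left.trans Subgroup.le_normalizer
  · exact sup_comm Q (pPrimeCore p G) ▸ Subgroup.normalizer_le_normalizer_sup_normal

theorem le_commutator_sup_centralizer_of_le_pCore (hpq : p ≠ q) (hQ : IsPGroup q Q)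
    {K : Subgroup G} [K.Normal] (hK : K ≤ pCore p G) :
    K ≤ (K ⊓ ⁅pCore p G, pPrimeCore p G ⊔ Q⁆) ⊔
      K ⊓ Subgroup.centralizer (pPrimeCore p G ⊔ Q : Subgroup G) := by
  have hqK : ¬ q ∣ Nat.card K := (Nat.Prime.coprime_iff_not_dvd Fact.out).1 <|
    (coprime_card_of_isPGroup ((isPGroup_pCore p G).to_le hK)
      ((Nat.coprime_primes Fact.out Fact.out).2 hpq.symm)).symm
  refine (le_commutator_sup_centralizer hQ hqK Subgroup.le_normalizer_of_normal).trans
    (sup_le_sup ?_ (le_inf inf_le_left ?_))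
  · exact le_inf (Subgroup.commutator_le_left K Q) (Subgroup.commutator_mono hK le_sup_right)
  · rw [Subgroup.le_centralizer_iff]
    refine sup_le ?_ (Subgroup.le_centralizer_iff.1 inf_le_right)
    exact pPrimeCore_le_centralizer_pCore.trans (Subgroup.centralizer_le (inf_le_left.trans hK))

theorem commutator_sup_normalizer_eq_top (hpq : p ≠ q) (hQ : IsPGroup q Q)
    (htop : fitting G ⊔ Subgroup.normalizer (Q : Set G) = ⊤) :
    ⁅pCore p G, pPrimeCore p G ⊔ Q⁆ ⊔
      Subgroup.normalizer (pPrimeCore p G ⊔ Q : Subgroup G) = ⊤ := by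
  rw [← top_le_iff, ← pCore_sup_normalizer_eq_top (p := p) htop]
  refine sup_le ((le_commutator_sup_centralizer_of_le_pCore hpq hQ le_rfl).trans ?_) le_sup_right
  exact sup_le_sup inf_le_right (inf_le_right.trans (Subgroup.centralizer_le_normalizer _))

theorem commutator_inf_normalizer_le_sylowCenter (hpq : p ≠ q) (hQ : IsPGroup q Q)
    (hclass : SylowClassLE p G 2) :
    ⁅pCore p G, pPrimeCore p G ⊔ Q⁆ ⊓ Subgroup.normalizer (pPrimeCore p G ⊔ Q : Subgroup G) ≤
      sylowCenter p G := by
  set U := pCore p G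
  set R := pPrimeCore p G ⊔ Q
  have hU : IsPGroup p U := isPGroup_pCore p G
  have hR : (Nat.card R).Coprime p := coprime_card_pPrimeCore_sup hpq hQ
  calc ⁅U, R⁆ ⊓ Subgroup.normalizer (R : Set G)
      ≤ ⁅U, R⁆ ⊓ Subgroup.centralizer (R : Set G) :=
        le_inf inf_le_left <| (inf_le_inf_right _ (Subgroup.commutator_le_left U R)).trans <|
          inf_normalizer_le_centralizer_of_disjoint (disjoint_pCore_of_coprime hR)
    _ ≤ ⁅U, U⁆ := commutator_inf_centralizer_le U R (coprime_card_of_isPGroup hU hR)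
    _ ≤ sylowCenter p G := commutator_le_sylowCenter hclass hU

theorem sylowCenter_le_commutator_sup_normalizer (hpq : p ≠ q) (hQ : IsPGroup q Q) {l : ℕ}
    [Fact l.Prime] {N : Subgroup G} (hN : N = ⁅pCore p G, pPrimeCore p G ⊔ Q⁆) :
    sylowCenter l G ≤ N ⊓ Subgroup.centralizer (N : Set G) ⊔
      sylowCenter l G ⊓ Subgroup.normalizer (pPrimeCore p G ⊔ Q : Subgroup G) ⊓
        Subgroup.centralizer (N : Set G) := by
  have hNp : N ≤ pCore p G := hN ▸ Subgroup.commutator_le_left _ _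
  obtain rfl | hl := eq_or_ne l p
  · have hcen : sylowCenter l G ≤ Subgroup.centralizer (N : Set G) :=
      sylowCenter_le_centralizer ((isPGroup_pCore l G).to_le hNp)
    refine (le_commutator_sup_centralizer_of_le_pCore hpq hQ (sylowCenter_le_pCore l G)).trans ?_
    rw [← hN]
    exact sup_le_sup (le_inf inf_le_right (inf_le_left.trans hcen)) <|
      le_inf (inf_le_inf_left _ (Subgroup.centralizer_le_normalizer _)) (inf_le_left.trans hcen)
  · have hle : sylowCenter l G ≤ pPrimeCore p G :=
      (sylowCenter_le_pCore l G).trans (pCore_le_pPrimeCore hl)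
    refine le_sup_of_le_right (le_inf (le_inf le_rfl ?_) ?_)
    · exact hle.trans (le_sup_left.trans Subgroup.le_normalizer)
    · exact hle.trans (pPrimeCore_le_centralizer_pCore.trans (Subgroup.centralizer_le hNp))

/-- A factorization `G = NH` along which a skew left brace on `H` can be glued with the trivial one
on the normal `p`-subgroup `N`, keeping control of the subgroups `sylowCenter l G`. -/
structure IsGluingFactorization (p : ℕ) (N H : Subgroup G) : Prop where
  normal : N.Normal
  isPGroup : IsPGroup p N
  sup_eq_top : N ⊔ H = ⊤
  inf_le_sylowCenter : N ⊓ H ≤ sylowCenter p G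
  sylowCenter_le {l : ℕ} (hl : l.Prime) : sylowCenter l G ≤
    N ⊓ Subgroup.centralizer (N : Set G) ⊔ sylowCenter l G ⊓ H ⊓ Subgroup.centralizer (N : Set G)

theorem exists_isGluingFactorization [Group.IsSolvable G] (hfit : fitting G ≠ ⊤)
    (hclass : ∀ p : ℕ, p.Prime → SylowClassLE p G 2) :
    ∃ p : ℕ, p.Prime ∧ ∃ N H : Subgroup G, H ≠ ⊤ ∧ IsGluingFactorization p N H := by
  obtain ⟨q, hq, Q, hQ, hQF, hqQ, htop⟩ := exists_sup_normalizer_eq_top hfit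
  have := Fact.mk hq
  obtain ⟨p, hp, hpq, hpQ⟩ := exists_pCore_not_le_centralizer hQ hQF (hqQ pCore_le_fitting) htop
  have := Fact.mk hp
  let R := pPrimeCore p G ⊔ Q
  refine ⟨p, hp, ⁅pCore p G, R⁆, Subgroup.normalizer (R : Set G), fun hR => hpQ ?_, ?_⟩
  · have hle := inf_normalizer_le_centralizer_of_disjoint
      (disjoint_pCore_of_coprime (coprime_card_pPrimeCore_sup hpq hQ))
    rw [hR, inf_top_eq] at hle
    exact hle.trans (Subgroup.centralizer_le (SetLike.coe_subset_coe.2 le_sup_right))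
  · exact
      { normal := normal_commutator_of_sup_normalizer_eq_top (pCore_sup_normalizer_eq_top htop)
        isPGroup := (isPGroup_pCore p G).to_le (Subgroup.commutator_le_left _ _)
        sup_eq_top := commutator_sup_normalizer_eq_top hpq hQ htop
        inf_le_sylowCenter := commutator_inf_normalizer_le_sylowCenter hpq hQ (hclass p hp)
        sylowCenter_le hl :=
          have := Fact.mk hl
          sylowCenter_le_commutator_sup_normalizer hpq hQ rfl }

end Splitting

theorem exists_skewLeftBrace_sylowCenter_le_socle {G : Type u} [Group G] [Finite G]
    [Group.IsSolvable G] (hclass : ∀ p : ℕ, p.Prime → SylowClassLE p G 2) :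
    ∃ (A : Type u) (_ : Group A) (B : SkewLeftBrace G A), Group.IsNilpotent A ∧
      ∀ p : ℕ, p.Prime → sylowCenter p G ≤ B.socle := by
  induction hn : Nat.card G using Nat.strong_induction_on generalizing G with
  | _ n ih =>
  subst hn
  obtain hfit | hfit := eq_or_ne (fitting G) ⊤
  · refine ⟨G, inferInstance, .trivial G, isNilpotent_of_fitting_eq_top hfit, fun p hp => ?_⟩
    have := Fact.mk hp
    exact (sylowCenter_le_center hfit).trans SkewLeftBrace.center_le_socle_trivial
  obtain ⟨p, hp, N, H, hH, h⟩ := exists_isGluingFactorization hfit hclass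
  have := Fact.mk hp
  have := h.normal
  have : Group.IsNilpotent N := h.isPGroup.isNilpotent
  have hcard : Nat.card H < Nat.card G :=
    lt_of_le_of_ne H.card_le_card_group (mt H.eq_top_of_card_eq hH)
  obtain ⟨A, _, B, _, hB⟩ := ih _ hcard (fun l hl => (hclass l hl).subgroup H) rfl
  have hcen : N ⊓ H ≤ Subgroup.centralizer N :=
    h.inf_le_sylowCenter.trans (sylowCenter_le_centralizer h.isPGroup)
  have hsoc : N.subgroupOf H ≤ B.socle := fun x hx =>
    hB p hp (subgroupOf_sylowCenter_le H (h.inf_le_sylowCenter ⟨hx, x.2⟩))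
  refine ⟨_, inferInstance, B.glue h.sup_eq_top hcen hsoc, inferInstance, fun l hl => ?_⟩
  refine (h.sylowCenter_le hl).trans (sup_le (fun x hx => ?_) fun x hx => ?_)
  · simpa using B.mul_mem_socle_glue h.sup_eq_top hcen hsoc (n := ⟨x, hx.1⟩) (h := 1) hx.2
      (one_mem _) (one_mem _)
  · simpa using B.mul_mem_socle_glue h.sup_eq_top hcen hsoc (n := 1) (h := ⟨x, hx.1.2⟩)
      (one_mem _) hx.2 (hB l hl (subgroupOf_sylowCenter_le H hx.1.1))

/-- every finite soluble group all of whose Sylow subgroups have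
nilpotency class at most `2` is the multiplicative group of a skew left brace of
nilpotent type. -/
theorem isNilpotentTypeSkewBraceGroup_of_sylow_class_two
    {G : Type u} [Group G] [Finite G] (hsol : IsSolvable G)
    (hSyl : ∀ p : ℕ, p.Prime → ∀ P : Sylow p G,
      lowerCentralSeries (P : Subgroup G) 2 = ⊥) :
    IsNilpotentTypeSkewBraceGroup G := by
  have : Group.IsSolvable G := hsol
  obtain ⟨A, _, B, _, -⟩ := exists_skewLeftBrace_sylowCenter_le_socle hSyl
  exact B.isNilpotentTypeSkewBraceGroup
end
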